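/- arXiv:2008.10044 — 2 statements merged into one kernel-verified Lean document; each statement's English description precedes it below -/
import Mathlib

section
/- Let A be a Nakayama algebra, S and T simple modules, and z ∈ ℕ. (a) If z is even, Ω^z(IT) = PS and pd T ≥ z, then Σ^z(PS) = IT and id S ≥ z. (b) If z is odd, Ω^z(T) = PS and pd(IT) ≥ z, then Σ^z(S) = IT and id(PS) ≥ z. -/
open CategoryTheory CategoryTheory.Limits

noncomputable section

namespace ArtinAlg

variable (A : Type) [Ring A]

/-- `M` admits a projective resolution of length at most `n`. -/
inductive ProjDimLE : ℕ → ModuleCat.{0} A → Prop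
  | zero (M : ModuleCat.{0} A) (h : Projective M) : ProjDimLE 0 M
  | succ (n : ℕ) (M P : ModuleCat.{0} A) (f : P ⟶ M) (hP : Projective P) (hf : Epi f)
      (h : ProjDimLE n (kernel f)) : ProjDimLE (n + 1) M

/-- `M` admits an injective coresolution of length at most `n`. -/
inductive InjDimLE : ℕ → ModuleCat.{0} A → Prop
  | zero (M : ModuleCat.{0} A) (h : Injective M) : InjDimLE 0 M
  | succ (n : ℕ) (M I : ModuleCat.{0} A) (f : M ⟶ I) (hI : Injective I) (hf : Mono f)
      (h : InjDimLE n (cokernel f)) : InjDimLE (n + 1) M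

/-- The projective dimension `pd M ∈ ℕ∞`. -/
def projDim (M : ModuleCat.{0} A) : ℕ∞ :=
  sInf {d : ℕ∞ | ∃ n : ℕ, d = n ∧ ProjDimLE A n M}

/-- The injective dimension `id M ∈ ℕ∞`. -/
def injDim (M : ModuleCat.{0} A) : ℕ∞ :=
  sInf {d : ℕ∞ | ∃ n : ℕ, d = n ∧ InjDimLE A n M}

/-- `f : P ⟶ M` is a projective cover: `P` is projective and `f` is an essential
(superfluous) epimorphism. -/
def IsProjectiveCoverHom {P M : ModuleCat.{0} A} (f : P ⟶ M) : Prop :=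
  Projective P ∧ Epi f ∧ ∀ (N : ModuleCat.{0} A) (g : N ⟶ P), Epi (g ≫ f) → Epi g

/-- `P` is a projective cover of `M`. -/
def IsProjCoverOf (M P : ModuleCat.{0} A) : Prop :=
  ∃ f : P ⟶ M, IsProjectiveCoverHom A f

/-- `f : M ⟶ I` is an injective envelope: `I` is injective and `f` is an essential
monomorphism. -/
def IsInjectiveEnvelopeHom {M I : ModuleCat.{0} A} (f : M ⟶ I) : Prop :=
  Injective I ∧ Mono f ∧ ∀ (N : ModuleCat.{0} A) (g : I ⟶ N), Mono (f ≫ g) → Mono g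

/-- `I` is an injective envelope of `M`. -/
def IsInjEnvOf (M I : ModuleCat.{0} A) : Prop :=
  ∃ f : M ⟶ I, IsInjectiveEnvelopeHom A f

/-- `X ≅ Ω M`, the kernel of a projective cover of `M`. -/
def IsSyzygyOf (M X : ModuleCat.{0} A) : Prop :=
  ∃ (P : ModuleCat.{0} A) (f : P ⟶ M), IsProjectiveCoverHom A f ∧ Nonempty (X ≅ kernel f)

/-- `X ≅ Σ M`, the cokernel of an injective envelope of `M`. -/
def IsCosyzygyOf (M X : ModuleCat.{0} A) : Prop :=
  ∃ (I : ModuleCat.{0} A) (f : M ⟶ I), IsInjectiveEnvelopeHom A f ∧ Nonempty (X ≅ cokernel f)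

/-- `X ≅ Ω^n M`. -/
def IsNthSyzygy : ℕ → ModuleCat.{0} A → ModuleCat.{0} A → Prop
  | 0, M, X => Nonempty (X ≅ M)
  | n + 1, M, X => ∃ Y, IsSyzygyOf A M Y ∧ IsNthSyzygy n Y X

/-- `X ≅ Σ^n M`. -/
def IsNthCosyzygy : ℕ → ModuleCat.{0} A → ModuleCat.{0} A → Prop
  | 0, M, X => Nonempty (X ≅ M)
  | n + 1, M, X => ∃ Y, IsCosyzygyOf A M Y ∧ IsNthCosyzygy n Y X

/-- `X` is a direct summand of `Y`. -/
def IsDirectSummandOf (X Y : ModuleCat.{0} A) : Prop :=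
  ∃ (i : X ⟶ Y) (r : Y ⟶ X), i ≫ r = 𝟙 X

/-- `X ∈ add W` : `X` is a direct summand of a finite direct sum of copies of `W`. -/
def InAdd (X W : ModuleCat.{0} A) : Prop :=
  ∃ n : ℕ, IsDirectSummandOf A X (ModuleCat.of A (Fin n → ↥W))

/-- The delooping level of `M` is at most `d` :
`Ω^d M ∈ add (A ⊕ Ω^{d+1} M')` for some finitely generated `M'`. -/
def DelLE (d : ℕ) (M : ModuleCat.{0} A) : Prop :=
  ∃ X, IsNthSyzygy A d M X ∧
    ∃ M' : ModuleCat.{0} A, Module.Finite A ↥M' ∧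
      ∃ X', IsNthSyzygy A (d + 1) M' X' ∧ InAdd A X (ModuleCat.of A (A × ↥X'))

/-- The delooping level `del M ∈ ℕ∞`. -/
def delLevel (M : ModuleCat.{0} A) : ℕ∞ :=
  sInf {d : ℕ∞ | ∃ n : ℕ, d = n ∧ DelLE A n M}

/-- The delooping level of the algebra: the supremum of `del S` over the simple modules. -/
def delAlg : ℕ∞ :=
  sSup {d : ℕ∞ | ∃ S : ModuleCat.{0} A, IsSimpleModule A ↥S ∧ delLevel A S = d}

/-- `Q` is a minimal injective cogenerator: the injective envelope of the direct sum of
a complete set of representatives of the simple modules. -/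
def IsMinimalInjectiveCogenerator (Q : ModuleCat.{0} A) : Prop :=
  ∃ (ι : Type) (_ : Fintype ι) (S : ι → ModuleCat.{0} A),
    (∀ i, IsSimpleModule A ↥(S i)) ∧
    (∀ T : ModuleCat.{0} A, IsSimpleModule A ↥T → ∃! i, Nonempty (↥T ≃ₗ[A] ↥(S i))) ∧
    IsInjEnvOf A (ModuleCat.of A (∀ i, ↥(S i))) Q

/-- The desuspending level of `M` is at most `d` :
`Σ^d M ∈ add (D(A) ⊕ Σ^{d+1} M')` for some finitely generated `M'`. -/
def DesLE (d : ℕ) (M : ModuleCat.{0} A) : Prop :=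
  ∃ X, IsNthCosyzygy A d M X ∧
    ∃ Q, IsMinimalInjectiveCogenerator A Q ∧
      ∃ M' : ModuleCat.{0} A, Module.Finite A ↥M' ∧
        ∃ X', IsNthCosyzygy A (d + 1) M' X' ∧ InAdd A X (ModuleCat.of A (↥Q × ↥X'))

/-- The desuspending level `des M ∈ ℕ∞`. -/
def desLevel (M : ModuleCat.{0} A) : ℕ∞ :=
  sInf {d : ℕ∞ | ∃ n : ℕ, d = n ∧ DesLE A n M}

/-- The desuspending level of the algebra. -/
def desAlg : ℕ∞ :=
  sSup {d : ℕ∞ | ∃ S : ModuleCat.{0} A, IsSimpleModule A ↥S ∧ desLevel A S = d}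

/-- The (small) finitistic projective dimension `fin-pro A`. -/
def finProDim : ℕ∞ :=
  sSup {d : ℕ∞ | ∃ M : ModuleCat.{0} A, Module.Finite A ↥M ∧ projDim A M = d ∧ d ≠ ⊤}

/-- The (small) finitistic injective dimension `fin-inj A`. -/
def finInjDim : ℕ∞ :=
  sSup {d : ℕ∞ | ∃ M : ModuleCat.{0} A, Module.Finite A ↥M ∧ injDim A M = d ∧ d ≠ ⊤}

/-- The big finitistic projective dimension `Fin-pro A`. -/
def bigFinProDim : ℕ∞ :=
  sSup {d : ℕ∞ | ∃ M : ModuleCat.{0} A, projDim A M = d ∧ d ≠ ⊤}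

/-- The big finitistic injective dimension `Fin-inj A`. -/
def bigFinInjDim : ℕ∞ :=
  sSup {d : ℕ∞ | ∃ M : ModuleCat.{0} A, injDim A M = d ∧ d ≠ ⊤}

/-- `M` is an indecomposable nonzero module. -/
def Indec (M : ModuleCat.{0} A) : Prop :=
  Nontrivial ↥M ∧ ∀ (N₁ N₂ : Submodule A ↥M), IsCompl N₁ N₂ → N₁ = ⊥ ∨ N₂ = ⊥

/-- `M` is serial (uniserial): its submodules form a chain. -/
def IsUniserial (M : ModuleCat.{0} A) : Prop :=
  ∀ N₁ N₂ : Submodule A ↥M, N₁ ≤ N₂ ∨ N₂ ≤ N₁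

/-- `A` is a Nakayama algebra: all finitely generated indecomposable modules are serial. -/
def IsNakayama : Prop :=
  ∀ M : ModuleCat.{0} A, Module.Finite A ↥M → Indec A M → IsUniserial A M

/-- `A` is connected: it is not a nontrivial product of algebras. -/
def IsConnectedAlgebra : Prop :=
  Nontrivial A ∧ ∀ e : A, IsIdempotentElem e → e ∈ Set.center A → e = 0 ∨ e = 1

/-- `A` is a cyclic Nakayama algebra: connected Nakayama with no simple projective module. -/
def IsCyclicNakayama : Prop :=
  IsNakayama A ∧ IsConnectedAlgebra A ∧
    ¬ ∃ S : ModuleCat.{0} A, IsSimpleModule A ↥S ∧ Projective S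

/-- `T ≅ top M` (and `top M` is simple): there is an essential epimorphism `M ⟶ T`. -/
def IsSimpleTopOf (M T : ModuleCat.{0} A) : Prop :=
  IsSimpleModule A ↥T ∧
    ∃ f : M ⟶ T, Epi f ∧ ∀ (N : ModuleCat.{0} A) (g : N ⟶ M), Epi (g ≫ f) → Epi g

/-- `S ≅ soc M` (and `soc M` is simple): there is an essential monomorphism `S ⟶ M`. -/
def IsSimpleSocOf (M S : ModuleCat.{0} A) : Prop :=
  IsSimpleModule A ↥S ∧
    ∃ f : S ⟶ M, Mono f ∧ ∀ (N : ModuleCat.{0} A) (g : M ⟶ N), Mono (f ≫ g) → Mono g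

/-- `0 ⟶ N ⟶ E ⟶ M ⟶ 0` is an almost split (Auslander-Reiten) sequence. -/
def IsAlmostSplitSeq {N E M : ModuleCat.{0} A} (f : N ⟶ E) (g : E ⟶ M) : Prop :=
  Mono f ∧ Epi g ∧ (∃ w : f ≫ g = 0, (ShortComplex.mk f g w).Exact) ∧
  (¬ ∃ s : M ⟶ E, s ≫ g = 𝟙 M) ∧ Indec A N ∧ Indec A M ∧
  ∀ (X : ModuleCat.{0} A) (h : X ⟶ M), (¬ ∃ s : M ⟶ X, s ≫ h = 𝟙 M) → ∃ h' : X ⟶ E, h' ≫ g = h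

/-- `N ≅ τ M`, the Auslander-Reiten translate of `M` : there is an almost split sequence
`0 ⟶ N ⟶ E ⟶ M ⟶ 0`. -/
def IsTauOf (N M : ModuleCat.{0} A) : Prop :=
  ∃ (E : ModuleCat.{0} A) (f : N ⟶ E) (g : E ⟶ M), IsAlmostSplitSeq A f g

/-- `U ≅ ψ S = τ⁻ top (I S)`. -/
def IsPsiOf (S U : ModuleCat.{0} A) : Prop :=
  ∃ I, IsInjEnvOf A S I ∧ ∃ T, IsSimpleTopOf A I T ∧ IsTauOf A T U

/-- `T ≅ γ S = τ soc (P S)`. -/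
def IsGammaOf (S T : ModuleCat.{0} A) : Prop :=
  ∃ P, IsProjCoverOf A S P ∧ ∃ U, IsSimpleSocOf A P U ∧ IsTauOf A T U

/-- `T ≅ φ S = top (I S)`. -/
def IsPhiOf (S T : ModuleCat.{0} A) : Prop :=
  ∃ I, IsInjEnvOf A S I ∧ IsSimpleTopOf A I T

/-- There is a `ψ`-path `(S_1, …, S_m)` of cardinality `m` ending in `S`. -/
def PsiPathTo (m : ℕ) (S : ModuleCat.{0} A) : Prop :=
  1 ≤ m ∧ ∃ c : ℕ → ModuleCat.{0} A,
    (∀ i < m, IsSimpleModule A ↥(c i)) ∧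
    (∀ i, i + 1 < m → IsPsiOf A (c i) (c (i + 1))) ∧
    Nonempty (c (m - 1) ≅ S)

/-- `a(S)`: the supremum of the cardinalities of `ψ`-paths ending in `S`. -/
def aVal (S : ModuleCat.{0} A) : ℕ∞ :=
  sSup {d : ℕ∞ | ∃ m : ℕ, d = m ∧ PsiPathTo A m S}

/-- `a(A)`: the maximum of `a(S)` over the simple modules which are not `ψ`-cyclic. -/
def aAlg : ℕ∞ :=
  sSup {d : ℕ∞ | ∃ S : ModuleCat.{0} A, IsSimpleModule A ↥S ∧ aVal A S ≠ ⊤ ∧ aVal A S = d}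

/-- `S` is a composition factor of `M`: a simple subquotient of `M`. -/
def IsCompFactorOf (S M : ModuleCat.{0} A) : Prop :=
  IsSimpleModule A ↥S ∧ ∃ N' N : Submodule A ↥M, N' ≤ N ∧
    Nonempty ((↥N ⧸ N'.comap N.subtype) ≃ₗ[A] ↥S)

/-- `e(S) = min {pd S, pd (I S)} = x`. -/
def ERelVal (S : ModuleCat.{0} A) (x : ℕ∞) : Prop :=
  ∃ I, IsInjEnvOf A S I ∧ x = min (projDim A S) (projDim A I)

/-- `e*(S) = min {id S, id (P S)} = x`. -/
def EStarVal (S : ModuleCat.{0} A) (x : ℕ∞) : Prop :=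
  ∃ P, IsProjCoverOf A S P ∧ x = min (injDim A S) (injDim A P)

/-- `T = h(S) = top (Ω^{e(S)} N S)`, the homological permutation. -/
def HRel (S T : ModuleCat.{0} A) : Prop :=
  IsSimpleModule A ↥S ∧ IsSimpleModule A ↥T ∧
  ∃ z : ℕ, ERelVal A S z ∧
    ∃ N, ((Odd z ∧ N = S) ∨ (Even z ∧ IsInjEnvOf A S N)) ∧
      ∃ X, IsNthSyzygy A z N X ∧ IsSimpleTopOf A X T

/-- `S = h*(T) = soc (Σ^{e*(T)} N* T)`, the inverse homological permutation. -/
def HStarRel (T S : ModuleCat.{0} A) : Prop :=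
  IsSimpleModule A ↥T ∧ IsSimpleModule A ↥S ∧
  ∃ z : ℕ, EStarVal A T z ∧
    ∃ N, ((Odd z ∧ N = T) ∨ (Even z ∧ IsProjCoverOf A T N)) ∧
      ∃ X, IsNthCosyzygy A z N X ∧ IsSimpleSocOf A X S

/-- The `t`-fold relational iterate of a relation on modules (up to isomorphism). -/
def IterRel (r : ModuleCat.{0} A → ModuleCat.{0} A → Prop) :
    ℕ → ModuleCat.{0} A → ModuleCat.{0} A → Prop
  | 0, X, Y => Nonempty (X ≅ Y)
  | n + 1, X, Y => ∃ Z, r X Z ∧ IterRel r n Z Y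

end ArtinAlg

namespace ArtinAlg

section LinearPart

variable {A : Type} [Ring A]

/-- Uniserial modules, unbundled. -/
def Unis (A : Type) [Ring A] (M : Type) [AddCommGroup M] [Module A M] : Prop :=
  ∀ N₁ N₂ : Submodule A M, N₁ ≤ N₂ ∨ N₂ ≤ N₁

variable {K M X P Y : Type} [AddCommGroup K] [Module A K] [AddCommGroup M] [Module A M]
  [AddCommGroup X] [Module A X] [AddCommGroup P] [Module A P] [AddCommGroup Y] [Module A Y]

lemma Unis.of_inj (h : Unis A M) (i : K →ₗ[A] M) (hi : Function.Injective i) : Unis A K := by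
  intro N₁ N₂
  rcases h (N₁.map i) (N₂.map i) with h | h
  · exact Or.inl ((Submodule.map_le_map_iff_of_injective hi _ _).1 h)
  · exact Or.inr ((Submodule.map_le_map_iff_of_injective hi _ _).1 h)

lemma Unis.of_surj (h : Unis A M) (f : M →ₗ[A] K) (hf : Function.Surjective f) : Unis A K := by
  intro N₁ N₂
  rcases h (N₁.comap f) (N₂.comap f) with h | h
  · exact Or.inl ((Submodule.comap_le_comap_iff_of_surjective hf).1 h)
  · exact Or.inr ((Submodule.comap_le_comap_iff_of_surjective hf).1 h)

lemma surj_of_length [IsArtinian A M] [IsNoetherian A M] (i : K →ₗ[A] M)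
    (hi : Function.Injective i) (hl : Module.length A M ≤ Module.length A K) :
    Function.Surjective i := by
  by_contra hs
  have h1 : LinearMap.range i ≠ ⊤ := fun h => hs (LinearMap.range_eq_top.1 h)
  have h2 := Submodule.length_lt h1
  rw [← (LinearEquiv.ofInjective i hi).length_eq] at h2
  exact absurd hl (not_le.2 h2)

lemma Unis.cyclic [IsArtinianRing A] [IsNoetherianRing A] (h : Unis A M) :
    ∃ x : M, Submodule.span A {x} = ⊤ := by
  have hA : Module.length A A ≠ ⊤ := Module.length_ne_top
  have hle : ∀ x : M, Module.length A (Submodule.span A {x}) ≤ Module.length A A := by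
    intro x
    rw [LinearMap.span_singleton_eq_range A M x]
    exact Module.length_le_of_surjective _ (LinearMap.surjective_rangeRestrict _)
  let f : M → ℕ := fun x => (Module.length A (Submodule.span A {x})).toNat
  have hb : BddAbove (Set.range f) := by
    refine ⟨(Module.length A A).toNat, ?_⟩
    rintro _ ⟨x, rfl⟩
    exact ENat.toNat_le_toNat (hle x) hA
  obtain ⟨x, hx⟩ := Nat.sSup_mem (Set.range_nonempty f) hb
  refine ⟨x, ?_⟩
  rw [eq_top_iff]
  rintro y -
  rcases h (Submodule.span A {x}) (Submodule.span A {y}) with hxy | hxy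
  · have hfy : f y ≤ f x := hx ▸ le_csSup hb ⟨y, rfl⟩
    have hlen : Module.length A (Submodule.span A {y}) ≤ Module.length A (Submodule.span A {x}) := by
      have h1 : Module.length A (Submodule.span A {y}) ≠ ⊤ := ne_top_of_le_ne_top hA (hle y)
      have h2 : Module.length A (Submodule.span A {x}) ≠ ⊤ := ne_top_of_le_ne_top hA (hle x)
      rw [← ENat.natCast_toNat h1, ← ENat.natCast_toNat h2]
      exact_mod_cast hfy
    have hart : IsArtinian A (Submodule.span A {y}) := by
      rw [LinearMap.span_singleton_eq_range A M y]
      exact isArtinian_of_surjective _ _ (LinearMap.surjective_rangeRestrict _)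
    have hnoe : IsNoetherian A (Submodule.span A {y}) := by
      rw [LinearMap.span_singleton_eq_range A M y]
      exact isNoetherian_of_surjective _ (LinearMap.range_rangeRestrict _)
    have hs := surj_of_length (Submodule.inclusion hxy) (Submodule.inclusion_injective hxy) hlen
    obtain ⟨w, hw⟩ := hs ⟨y, Submodule.mem_span_singleton_self y⟩
    have : (w : M) = y := congrArg Subtype.val hw
    rw [← this]; exact w.2
  · exact hxy (Submodule.mem_span_singleton_self y)

lemma Unis.exists_surj [IsArtinianRing A] [IsNoetherianRing A] (h : Unis A M) :
    ∃ f : A →ₗ[A] M, Function.Surjective f := by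
  obtain ⟨x, hx⟩ := h.cyclic
  refine ⟨LinearMap.toSpanSingleton A M x, ?_⟩
  rw [← LinearMap.range_eq_top, ← LinearMap.span_singleton_eq_range, hx]

/-- uniform modules over Nakayama algebras are uniserial -/
lemma unis_of_uniform (hNak : IsNakayama A)
    (hM : ∀ N₁ N₂ : Submodule A M, N₁ ⊓ N₂ = ⊥ → N₁ = ⊥ ∨ N₂ = ⊥) : Unis A M := by
  intro N₁ N₂
  by_contra hcon
  rw [not_or, SetLike.not_le_iff_exists, SetLike.not_le_iff_exists] at hcon
  obtain ⟨⟨x, hx1, hx2⟩, ⟨y, hy2, hy1⟩⟩ := hcon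
  let N : Submodule A M := Submodule.span A {x, y}
  have hxN : x ∈ N := Submodule.subset_span (by simp)
  have hyN : y ∈ N := Submodule.subset_span (by simp)
  have hfin : Module.Finite A N := Module.Finite.iff_fg.2
    (Submodule.fg_span (by simp))
  have hne : (⟨x, hxN⟩ : N) ≠ 0 := by
    intro h0
    have : x = 0 := congrArg Subtype.val h0
    exact hx2 (this ▸ N₂.zero_mem)
  have hind : Indec A (ModuleCat.of A N) := by
    refine ⟨⟨⟨⟨x, hxN⟩, 0, hne⟩⟩, ?_⟩
    intro (L₁ : Submodule A N) (L₂ : Submodule A N) hc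
    have h0 : L₁.map N.subtype ⊓ L₂.map N.subtype = ⊥ := by
      rw [← Submodule.map_inf _ N.subtype_injective, hc.inf_eq_bot, Submodule.map_bot]
    rcases hM _ _ h0 with h | h
    · exact Or.inl (Submodule.map_injective_of_injective N.subtype_injective (by rw [h, Submodule.map_bot]))
    · exact Or.inr (Submodule.map_injective_of_injective N.subtype_injective (by rw [h, Submodule.map_bot]))
  have hu : Unis A N := hNak (ModuleCat.of A N) hfin hind
  rcases hu (N₁.comap N.subtype) (N₂.comap N.subtype) with h | h
  · exact hx2 (h (show (⟨x, hxN⟩ : N) ∈ _ from hx1))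
  · exact hy1 (h (show (⟨y, hyN⟩ : N) ∈ _ from hy2))

/-- essential injection -/
def Ess (i : Y →ₗ[A] M) : Prop :=
  Function.Injective i ∧ ∀ N : Submodule A M, N ⊓ LinearMap.range i = ⊥ → N = ⊥

/-- superfluous surjection -/
def Supf (f : P →ₗ[A] X) : Prop :=
  Function.Surjective f ∧ ∀ N : Submodule A P, N.map f = ⊤ → N = ⊤

lemma Unis.of_ess (hNak : IsNakayama A) (h : Unis A Y) (i : Y →ₗ[A] M) (hi : Ess i) :
    Unis A M := by
  have key : ∀ N₁ N₂ : Submodule A M, N₁ ⊓ N₂ = ⊥ → N₁.comap i ≤ N₂.comap i → N₁ = ⊥ := by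
    intro N₁ N₂ h0 hle
    apply hi.2
    rw [eq_bot_iff]
    rintro _ ⟨h1, ⟨y, rfl⟩⟩
    rw [← h0]
    exact ⟨h1, hle h1⟩
  apply unis_of_uniform hNak
  intro N₁ N₂ h0
  rcases h (N₁.comap i) (N₂.comap i) with hle | hle
  · exact Or.inl (key _ _ h0 hle)
  · exact Or.inr (key _ _ (by rwa [inf_comm]) hle)

lemma Unis.of_supf [IsArtinianRing A] [IsNoetherianRing A] (hNak : IsNakayama A) (h : Unis A X)
    (f : P →ₗ[A] X) (hf : Supf f) : Unis A P := by
  rcases subsingleton_or_nontrivial P with hP | hP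
  · intro N₁ N₂
    left
    intro x _
    rw [Subsingleton.elim x 0]
    exact N₂.zero_mem
  obtain ⟨x, hx⟩ := h.cyclic
  obtain ⟨p, rfl⟩ := hf.1 x
  have hp : Submodule.span A {p} = ⊤ := hf.2 _ (by
    rw [Submodule.map_span, Set.image_singleton, hx])
  have hfin : Module.Finite A P := ⟨⟨{p}, by simpa using hp⟩⟩
  refine hNak (ModuleCat.of A P) hfin ⟨hP, ?_⟩
  intro (N₁ : Submodule A P) (N₂ : Submodule A P) hc
  have h1 : N₁.map f ⊔ N₂.map f = ⊤ := by
    rw [← Submodule.map_sup, hc.sup_eq_top, Submodule.map_top, LinearMap.range_eq_top.2 hf.1]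
  rcases h (N₁.map f) (N₂.map f) with hle | hle
  · left
    have : N₂ = ⊤ := hf.2 _ (by rwa [sup_eq_right.2 hle] at h1)
    have h2 := hc.inf_eq_bot
    rwa [this, inf_top_eq] at h2
  · right
    have : N₁ = ⊤ := hf.2 _ (by rwa [sup_eq_left.2 hle] at h1)
    have h2 := hc.inf_eq_bot
    rwa [this, top_inf_eq] at h2

lemma exists_cover [IsArtinianRing A] [IsNoetherianRing A] (h : Unis A X) :
    ∃ (P : ModuleCat.{0} A) (f : P →ₗ[A] X), Module.Projective A P ∧ Supf f := by
  classical
  let p : ℕ → Prop := fun n => ∃ (P : ModuleCat.{0} A) (f : P →ₗ[A] X), Module.Projective A P ∧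
    IsArtinian A P ∧ IsNoetherian A P ∧ Function.Surjective f ∧ Module.length A P = n
  have hex : ∃ n, p n := by
    obtain ⟨f, hf⟩ := h.exists_surj
    exact ⟨(Module.length A A).toNat, ModuleCat.of A A, f, (inferInstance : Module.Projective A A),
      (inferInstance : IsArtinian A A), (inferInstance : IsNoetherian A A), hf,
      (ENat.natCast_toNat (Module.length_ne_top (R := A) (M := A))).symm⟩
  obtain ⟨P, f, hP, hart, hnoe, hf, hlen⟩ := Nat.find_spec hex
  refine ⟨P, f, hP, hf, ?_⟩
  intro N hN
  have hsN : Function.Surjective (f ∘ₗ N.subtype) := by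
    rw [← LinearMap.range_eq_top, LinearMap.range_comp, Submodule.range_subtype, hN]
  obtain ⟨g, hg⟩ := Module.projective_lifting_property (f ∘ₗ N.subtype) f hsN
  let e : Module.End A P := N.subtype ∘ₗ g
  have hfe : f ∘ₗ e = f := hg
  have hfe' : ∀ n, f ∘ₗ (e ^ n) = f := by
    intro n
    induction n with
    | zero => rfl
    | succ n ih =>
      rw [pow_succ, Module.End.mul_eq_comp, ← LinearMap.comp_assoc, ih, hfe]
  obtain ⟨n, hn1, hn2⟩ := ((LinearMap.eventually_isCompl_ker_pow_range_pow e).and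
    (Filter.eventually_ge_atTop 1)).exists
  let Q : Submodule A P := LinearMap.range (e ^ n)
  have hQp : Module.Projective A Q := by
    refine Module.Projective.of_split Q.subtype (Submodule.projectionOnto Q _ hn1.symm) ?_
    ext x; simp
  have hQs : Function.Surjective (f ∘ₗ Q.subtype) := by
    intro x
    obtain ⟨y, rfl⟩ := hf x
    refine ⟨⟨(e ^ n) y, LinearMap.mem_range_self _ _⟩, ?_⟩
    exact LinearMap.congr_fun (hfe' n) y
  have hQl : Module.length A Q ≠ ⊤ := Module.length_ne_top
  have hpQ : p (Module.length A Q).toNat :=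
    ⟨ModuleCat.of A Q, f ∘ₗ Q.subtype, hQp, (inferInstance : IsArtinian A Q),
      (inferInstance : IsNoetherian A Q), hQs, (ENat.natCast_toNat hQl).symm⟩
  have hmin := Nat.find_min' hex hpQ
  have hsur := surj_of_length Q.subtype Q.subtype_injective (by
    rw [hlen, ← ENat.natCast_toNat hQl]; exact_mod_cast hmin)
  rw [eq_top_iff]
  rintro x -
  obtain ⟨⟨_, ⟨w, rfl⟩⟩, rfl⟩ := hsur x
  obtain ⟨m, rfl⟩ : ∃ m, n = m + 1 := ⟨n - 1, by omega⟩
  have hw : (e ^ (m + 1)) w = e ((e ^ m) w) := by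
    rw [pow_succ', Module.End.mul_apply]
  show (e ^ (m + 1)) w ∈ N
  rw [hw]
  exact (g ((e ^ m) w)).2

lemma Ess.comp {i : Y →ₗ[A] M} {j : M →ₗ[A] K} (hi : Ess i) (hj : Ess j) : Ess (j ∘ₗ i) := by
  refine ⟨hj.1.comp hi.1, fun N hN => ?_⟩
  have h1 : N.comap j = ⊥ := hi.2 _ (by
    rw [eq_bot_iff]
    rintro _ ⟨h1, ⟨y, rfl⟩⟩
    have : j (i y) ∈ N ⊓ LinearMap.range (j ∘ₗ i) := ⟨h1, ⟨y, rfl⟩⟩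
    rw [hN, Submodule.mem_bot] at this
    rw [Submodule.mem_bot]
    exact hj.1 (by rw [this, map_zero]))
  apply hj.2
  rw [eq_bot_iff]
  rintro _ ⟨h2, ⟨y, rfl⟩⟩
  have : y ∈ N.comap j := h2
  rw [h1, Submodule.mem_bot] at this
  rw [this, map_zero]; exact Submodule.zero_mem _

/-- an injective map becomes essential after passing to a quotient -/
lemma exists_ess_quot (j : M →ₗ[A] K) (hj : Function.Injective j) :
    ∃ C : Submodule A K, Ess (C.mkQ ∘ₗ j) := by
  obtain ⟨C, hC⟩ := zorn_le₀ {C : Submodule A K | Disjoint C (LinearMap.range j)} (by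
    intro c hc hchain
    refine ⟨sSup c, ?_, fun s hs => le_sSup hs⟩
    rcases c.eq_empty_or_nonempty with rfl | hne
    · simp
    · exact (hchain.directedOn.disjoint_sSup_left).2 (fun b hb => hc hb))
  have hCd := hC.1
  refine ⟨C, ?_, ?_⟩
  · rw [← LinearMap.ker_eq_bot, eq_bot_iff]
    intro x hx
    have hx' : j x ∈ C := by simpa using hx
    have h0 : j x = 0 := Submodule.disjoint_def.1 hCd _ hx' ⟨x, rfl⟩
    rw [Submodule.mem_bot]
    exact hj (by rw [h0, map_zero])
  · intro N hN
    have hle : C ≤ N.comap C.mkQ := by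
      intro x hx
      have : C.mkQ x = 0 := by simpa using hx
      rw [Submodule.mem_comap, this]; exact N.zero_mem
    have hd : Disjoint (N.comap C.mkQ) (LinearMap.range j) := by
      rw [Submodule.disjoint_def]
      rintro _ hx ⟨y, rfl⟩
      have : C.mkQ (j y) ∈ N ⊓ LinearMap.range (C.mkQ ∘ₗ j) := ⟨hx, ⟨y, rfl⟩⟩
      rw [hN, Submodule.mem_bot] at this
      have hx' : j y ∈ C := by simpa using this
      exact Submodule.disjoint_def.1 hCd _ hx' ⟨y, rfl⟩
    have heq : N.comap C.mkQ ≤ C := hC.2 hd hle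
    rw [eq_bot_iff]
    intro x hx
    obtain ⟨y, rfl⟩ := C.mkQ_surjective x
    have : y ∈ C := heq hx
    simpa using this

lemma exists_envelope [IsArtinianRing A] [IsNoetherianRing A] (hNak : IsNakayama A)
    (h : Unis A Y) : ∃ (I : ModuleCat.{0} A) (i : Y →ₗ[A] I), Injective I ∧ Ess i := by
  have hA : Module.length A A ≠ ⊤ := Module.length_ne_top
  let s : Set ℕ := {n | ∃ (I : ModuleCat.{0} A) (i : Y →ₗ[A] I), Ess i ∧ Module.length A I = n}
  have hle : ∀ (I : ModuleCat.{0} A) (i : Y →ₗ[A] I), Ess i →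
      Module.length A I ≤ Module.length A A := by
    intro I i hi
    obtain ⟨f, hf⟩ := (h.of_ess hNak i hi).exists_surj
    exact Module.length_le_of_surjective f hf
  have hb : BddAbove s := by
    refine ⟨(Module.length A A).toNat, ?_⟩
    rintro n ⟨I, i, hi, hn⟩
    have := ENat.toNat_le_toNat (hle I i hi) hA
    simpa [hn] using this
  have hmem : ∀ (I : ModuleCat.{0} A) (i : Y →ₗ[A] I), Ess i →
      (Module.length A I).toNat ∈ s := fun I i hi => ⟨I, i, hi,
        (ENat.natCast_toNat (ne_top_of_le_ne_top hA (hle I i hi))).symm⟩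
  have hid : Ess (LinearMap.id : Y →ₗ[A] Y) := ⟨fun _ _ h => h, fun N hN => by simpa using hN⟩
  obtain ⟨I, i, hi, hlen⟩ := Nat.sSup_mem ⟨_, hmem (ModuleCat.of A Y) LinearMap.id hid⟩ hb
  refine ⟨I, i, ?_, hi⟩
  have hj : Function.Injective (Injective.ι I).hom :=
    (ModuleCat.mono_iff_injective _).1 inferInstance
  obtain ⟨C, hC⟩ := exists_ess_quot (Injective.ι I).hom hj
  have hcomp := hi.comp hC
  have hart : ∀ {Z : Type} [AddCommGroup Z] [Module A Z], Unis A Z →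
      IsArtinian A Z ∧ IsNoetherian A Z := by
    intro Z _ _ hZ
    obtain ⟨f, hf⟩ := hZ.exists_surj
    exact ⟨isArtinian_of_surjective _ f hf,
      isNoetherian_of_surjective f (LinearMap.range_eq_top.2 hf)⟩
  obtain ⟨_, _⟩ := hart (h.of_ess hNak _ hcomp)
  have hl2 := hle (ModuleCat.of A (↥(Injective.under I) ⧸ C)) _ hcomp
  have hsur := surj_of_length (C.mkQ ∘ₗ (Injective.ι I).hom) hC.1 (by
    have h3 := le_csSup hb (hmem (ModuleCat.of A (↥(Injective.under I) ⧸ C)) _ hcomp)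
    rw [hlen, ← ENat.natCast_toNat (ne_top_of_le_ne_top hA hl2)]
    exact_mod_cast h3)
  let e := LinearEquiv.ofBijective (C.mkQ ∘ₗ (Injective.ι I).hom) ⟨hC.1, hsur⟩
  let r : Retract I (Injective.under I) :=
    { i := Injective.ι I
      r := ModuleCat.ofHom (e.symm.toLinearMap ∘ₗ C.mkQ)
      retract := by
        ext x
        exact e.symm_apply_apply x }
  exact r.injective

end LinearPart

end ArtinAlg
namespace ArtinAlg

section CatPart

open Abelian

variable {A : Type} [Ring A]

lemma supf_of_cover {P M : ModuleCat.{0} A} {f : P ⟶ M} (h : IsProjectiveCoverHom A f) :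
    Supf f.hom := by
  obtain ⟨_, h2, h3⟩ := h
  refine ⟨(ModuleCat.epi_iff_surjective f).1 h2, fun N hN => ?_⟩
  have h4 := h3 (ModuleCat.of A N) (ModuleCat.ofHom N.subtype) (by
    rw [ModuleCat.epi_iff_range_eq_top]
    rw [ModuleCat.hom_comp, LinearMap.range_comp, ModuleCat.hom_ofHom, Submodule.range_subtype, hN])
  rw [ModuleCat.epi_iff_range_eq_top, ModuleCat.hom_ofHom, Submodule.range_subtype] at h4
  exact h4

lemma cover_of_supf {P M : ModuleCat.{0} A} {f : P ⟶ M} (hP : Projective P) (h : Supf f.hom) :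
    IsProjectiveCoverHom A f := by
  refine ⟨hP, (ModuleCat.epi_iff_surjective f).2 h.1, fun N g hg => ?_⟩
  rw [ModuleCat.epi_iff_range_eq_top] at hg ⊢
  rw [ModuleCat.hom_comp, LinearMap.range_comp] at hg
  exact h.2 _ hg

lemma env_of_ess {M I : ModuleCat.{0} A} {f : M ⟶ I} (hI : Injective I) (h : Ess f.hom) :
    IsInjectiveEnvelopeHom A f := by
  refine ⟨hI, (ModuleCat.mono_iff_injective f).2 h.1, fun N g hg => ?_⟩
  rw [ModuleCat.mono_iff_injective] at hg
  rw [ModuleCat.mono_iff_ker_eq_bot]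
  apply h.2
  rw [eq_bot_iff]
  rintro _ ⟨h1, ⟨y, rfl⟩⟩
  have h2 : (f ≫ g).hom y = (f ≫ g).hom 0 := by
    rw [map_zero]; exact h1
  have h3 : y = 0 := hg h2
  rw [h3, map_zero]; exact Submodule.zero_mem _

lemma ess_of_env {M I : ModuleCat.{0} A} {f : M ⟶ I} (h : IsInjectiveEnvelopeHom A f) :
    Ess f.hom := by
  obtain ⟨_, h2, h3⟩ := h
  have hinj := (ModuleCat.mono_iff_injective f).1 h2
  refine ⟨hinj, fun N hN => ?_⟩
  have h4 := h3 (ModuleCat.of A (I ⧸ N)) (ModuleCat.ofHom N.mkQ) (by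
    rw [ModuleCat.mono_iff_ker_eq_bot, eq_bot_iff]
    intro x hx
    have hx' : N.mkQ (f.hom x) = 0 := hx
    have hx2 : f.hom x ∈ N := by simpa using hx'
    have hx3 : f.hom x ∈ N ⊓ LinearMap.range f.hom := ⟨hx2, ⟨x, rfl⟩⟩
    rw [hN, Submodule.mem_bot] at hx3
    rw [Submodule.mem_bot]
    exact hinj (by rw [map_zero]; exact hx3))
  rw [ModuleCat.mono_iff_ker_eq_bot, ModuleCat.hom_ofHom, Submodule.ker_mkQ] at h4
  exact h4

/-- Data of a first syzygy. -/
structure Syz (M K : ModuleCat.{0} A) where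
  P : ModuleCat.{0} A
  i : K ⟶ P
  f : P ⟶ M
  w : i ≫ f = 0
  ses : (ShortComplex.mk i f w).ShortExact
  proj : Projective P
  supf : Supf f.hom

lemma Syz.of {M K : ModuleCat.{0} A} (h : IsSyzygyOf A M K) : Nonempty (Syz M K) := by
  obtain ⟨P, f, hf, ⟨e⟩⟩ := h
  have := hf.2.1
  refine ⟨⟨P, e.hom ≫ kernel.ι f, f, by simp, ?_, hf.1, supf_of_cover hf⟩⟩
  have hex : (ShortComplex.mk (e.hom ≫ kernel.ι f) f (by simp)).Exact := by
    have h1 := ShortComplex.exact_kernel f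
    let φ : ShortComplex.mk (e.hom ≫ kernel.ι f) f (by simp) ≅
        ShortComplex.mk (kernel.ι f) f (kernel.condition f) :=
      ShortComplex.isoMk e (Iso.refl _) (Iso.refl _) (by simp) (by simp)
    exact (ShortComplex.exact_iff_of_iso φ).2 h1
  exact { exact := hex, mono_f := mono_comp _ _, epi_g := this }

variable {X Y X' Y' M K W : ModuleCat.{0} A}

lemma Syz.inj (s : Syz M K) : Function.Injective s.i.hom :=
  (ModuleCat.mono_iff_injective _).1 s.ses.mono_f

lemma Syz.exact (s : Syz M K) (x : s.P) (hx : s.f.hom x = 0) : ∃ y, s.i.hom y = x :=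
  (ShortComplex.moduleCat_exact_iff _).1 s.ses.exact x hx

lemma Syz.fi (s : Syz M K) (x : K) : s.f.hom (s.i.hom x) = 0 :=
  LinearMap.congr_fun (congrArg ModuleCat.Hom.hom s.w) x

lemma Syz.lift (s : Syz X X') (t : Syz Y Y') (u : X ⟶ Y) :
    ∃ (a : X' ⟶ Y') (b : s.P ⟶ t.P), a ≫ t.i = s.i ≫ b ∧ b ≫ t.f = s.f ≫ u := by
  have := s.proj
  have := t.ses.epi_g
  have := t.ses.mono_f
  have : Epi t.f := t.ses.epi_g
  have hb := Projective.factorThru_comp (s.f ≫ u) t.f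
  refine ⟨t.ses.exact.lift (s.i ≫ Projective.factorThru (s.f ≫ u) t.f) ?_,
    Projective.factorThru (s.f ≫ u) t.f, ?_, hb⟩
  · show (s.i ≫ Projective.factorThru (s.f ≫ u) t.f) ≫ t.f = 0
    rw [Category.assoc, hb, ← Category.assoc, s.w, zero_comp]
  · exact t.ses.exact.lift_f _ _

lemma congr_hom {X Y : ModuleCat.{0} A} {f g : X ⟶ Y} (h : f = g) (x : X) : f.hom x = g.hom x := by
  rw [h]

/-- `Extⁿ(u, W)` is nonzero. -/
def QQ (n : ℕ) (u : X ⟶ Y) (W : ModuleCat.{0} A) : Prop :=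
  ∃ θ : Ext Y W n, (Ext.mk₀ u).comp θ (zero_add n) ≠ 0

lemma QQ.step (s : Syz X X') (t : Syz Y Y') {u : X ⟶ Y} {a : X' ⟶ Y'} {b : s.P ⟶ t.P}
    (h1 : a ≫ t.i = s.i ≫ b) (h2 : b ≫ t.f = s.f ≫ u) {n : ℕ} (θ : Ext Y' W n)
    (hθ : ∀ x : Ext s.P W n, (Ext.mk₀ s.i).comp x (zero_add n) ≠
      (Ext.mk₀ a).comp θ (zero_add n)) : QQ (n + 1) u W := by
  let φ : ShortComplex.mk s.i s.f s.w ⟶ ShortComplex.mk t.i t.f t.w :=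
    { τ₁ := a, τ₂ := b, τ₃ := u, comm₁₂ := h1, comm₂₃ := h2 }
  have hnat := ShortComplex.ShortExact.extClass_naturality s.ses t.ses φ
  refine ⟨t.ses.extClass.comp θ (add_comm 1 n), fun h0 => ?_⟩
  have h3 : s.ses.extClass.comp ((Ext.mk₀ a).comp θ (zero_add n)) (add_comm 1 n) = 0 := by
    rw [← Ext.comp_assoc (Ext.mk₀ u) t.ses.extClass θ (zero_add 1) (add_comm 1 n) (by omega)] at h0
    rw [← h0, ← Ext.comp_assoc s.ses.extClass (Ext.mk₀ a) θ (add_zero 1) (zero_add n) (by omega)]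
    congr 1
  obtain ⟨x, hx⟩ := Ext.contravariant_sequence_exact₁ s.ses W _ (add_comm 1 n) h3
  exact hθ x hx

lemma QQ.succ (s : Syz X X') (t : Syz Y Y') {u : X ⟶ Y} {a : X' ⟶ Y'} {b : s.P ⟶ t.P}
    (h1 : a ≫ t.i = s.i ≫ b) (h2 : b ≫ t.f = s.f ≫ u) {n : ℕ} (h : QQ (n + 1) a W) :
    QQ (n + 1 + 1) u W := by
  obtain ⟨θ, hθ⟩ := h
  refine QQ.step s t h1 h2 θ (fun x hx => hθ ?_)
  have := s.proj
  rw [← hx, Ext.eq_zero_of_projective x, Ext.comp_zero]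

lemma QQ.one (s : Syz X X') (t : Syz Y Y') {u : X ⟶ Y} {a : X' ⟶ Y'} {b : s.P ⟶ t.P}
    (h1 : a ≫ t.i = s.i ≫ b) (h2 : b ≫ t.f = s.f ≫ u) (α : Y' ⟶ W)
    (h : ∀ g : s.P ⟶ W, s.i ≫ g ≠ a ≫ α) :
    QQ 1 u W := by
  refine QQ.step s t h1 h2 (Ext.mk₀ α) (fun x hx => ?_)
  obtain ⟨g, rfl⟩ := (Ext.mk₀_bijective _ _).2 x
  rw [Ext.mk₀_comp_mk₀, Ext.mk₀_comp_mk₀] at hx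
  exact h g ((Ext.mk₀_bijective _ _).1 hx)

lemma QQ.cosyz {u : X ⟶ Y} {I : ModuleCat.{0} A} (f : W ⟶ I) [Mono f] [Injective I] {n : ℕ}
    (h : QQ (n + 1) u W) : QQ n u (cokernel f) := by
  obtain ⟨θ, hθ⟩ := h
  have ses : (ShortComplex.mk f (cokernel.π f) (by simp)).ShortExact :=
    { exact := ShortComplex.exact_cokernel f, mono_f := inferInstance, epi_g := inferInstance }
  obtain ⟨x, hx⟩ := Ext.covariant_sequence_exact₁ Y ses θ (Ext.eq_zero_of_injective _) rfl
  refine ⟨x, fun h0 => hθ ?_⟩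
  rw [← hx, ← Ext.comp_assoc (Ext.mk₀ u) x ses.extClass (zero_add n) rfl (by omega), h0,
    Ext.zero_comp]

lemma ext_zero_of_injDimLE {n : ℕ} (h : InjDimLE A n W) :
    ∀ (m : ℕ), n < m → ∀ (X : ModuleCat.{0} A) (θ : Ext X W m), θ = 0 := by
  induction h with
  | zero W h =>
    intro m hm X θ
    obtain ⟨k, rfl⟩ : ∃ k, m = k + 1 := ⟨m - 1, by omega⟩
    exact Ext.eq_zero_of_injective _
  | succ n W I f hI hf h ih =>
    intro m hm X θ
    obtain ⟨k, rfl⟩ : ∃ k, m = k + 1 := ⟨m - 1, by omega⟩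
    by_contra hne
    obtain ⟨θ', hθ'⟩ := QQ.cosyz f (u := 𝟙 X) ⟨θ, by simpa using hne⟩
    apply hθ'
    rw [ih k (by omega) X θ', Ext.comp_zero]

lemma le_injDim {z : ℕ} {u : X ⟶ Y} (h : QQ z u W) : (z : ℕ∞) ≤ injDim A W := by
  refine le_sInf ?_
  rintro d ⟨n, rfl, hn⟩
  by_contra hlt
  obtain ⟨θ, hθ⟩ := h
  apply hθ
  rw [ext_zero_of_injDimLE hn z (by simpa using hlt) _ θ, Ext.comp_zero]

lemma ProjDimLE.of_iso {n : ℕ} (h : ProjDimLE A n M) :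
    ∀ {M' : ModuleCat.{0} A}, (M ≅ M') → ProjDimLE A n M' := by
  induction h with
  | zero M h => intro M' e; exact .zero _ (Projective.of_iso e h)
  | succ n M P f hP hf h ih =>
    intro M' e
    refine .succ n M' P (f ≫ e.hom) hP (epi_comp _ _) (ih ?_)
    exact (kernelCompMono f e.hom).symm

lemma projDimLE_of_syz {n : ℕ} : ∀ {M : ModuleCat.{0} A}, IsNthSyzygy A (n + 1) M X →
    Subsingleton X → ProjDimLE A n M := by
  induction n with
  | zero =>
    rintro M ⟨Y, hY, ⟨e⟩⟩ hX
    obtain ⟨s⟩ := Syz.of hY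
    have hinj : Function.Injective s.f.hom := by
      rw [← LinearMap.ker_eq_bot, eq_bot_iff]
      intro x hx
      obtain ⟨y, rfl⟩ := s.exact x hx
      have : y = 0 := by
        have h1 : y = e.hom.hom (e.inv.hom y) := (congr_hom e.inv_hom_id y).symm
        rw [h1, Subsingleton.elim (e.inv.hom y) 0, map_zero]
      rw [this, map_zero]; exact Submodule.zero_mem _
    have : Mono s.f := (ModuleCat.mono_iff_injective _).2 hinj
    have : Epi s.f := s.ses.epi_g
    have := isIso_of_mono_of_epi s.f
    exact .zero _ (Projective.of_iso (asIso s.f) s.proj)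
  | succ n ih =>
    rintro M ⟨Y, ⟨P, f, hf, ⟨e⟩⟩, h⟩ hX
    exact .succ n M P f hf.1 hf.2.1 ((ih h hX).of_iso e)

lemma IsNthCosyzygy.congr {n : ℕ} {Z Z' : ModuleCat.{0} A} (e : Z' ≅ Z) :
    ∀ {W : ModuleCat.{0} A}, IsNthCosyzygy A n W Z → IsNthCosyzygy A n W Z' := by
  induction n with
  | zero => rintro W ⟨e'⟩; exact ⟨e ≪≫ e'⟩
  | succ n ih => rintro W ⟨V, hV, h⟩; exact ⟨V, hV, ih h⟩

lemma IsNthSyzygy.nontrivial {n : ℕ} [Nontrivial X] :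
    ∀ {M : ModuleCat.{0} A}, IsNthSyzygy A n M X → Nontrivial M := by
  induction n with
  | zero =>
    rintro M ⟨e⟩
    exact e.toLinearEquiv.symm.toEquiv.nontrivial
  | succ n ih =>
    rintro M ⟨V, hV, h⟩
    have := ih h
    obtain ⟨s⟩ := Syz.of hV
    by_contra hM
    rw [not_nontrivial_iff_subsingleton] at hM
    have h1 : (⊥ : Submodule A s.P) = ⊤ := s.supf.2 _ (Subsingleton.elim _ _)
    obtain ⟨v, hv⟩ := exists_ne (0 : V)
    apply hv
    apply s.inj
    rw [map_zero]
    have : s.i.hom v ∈ (⊥ : Submodule A s.P) := h1 ▸ Submodule.mem_top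
    simpa using this

lemma Syz.b_surj (s : Syz X X') (t : Syz Y Y') {u : X ⟶ Y} (hu : Epi u) {b : s.P ⟶ t.P}
    (h2 : b ≫ t.f = s.f ≫ u) : Function.Surjective b.hom := by
  rw [← LinearMap.range_eq_top]
  apply t.supf.2
  rw [← LinearMap.range_comp, ← ModuleCat.hom_comp, h2, LinearMap.range_eq_top]
  exact ((ModuleCat.epi_iff_surjective _).1 hu).comp s.supf.1

section Nak

variable [IsArtinianRing A] [IsNoetherianRing A]

lemma Syz.unis (hNak : IsNakayama A) (s : Syz M K) (h : Unis A M) : Unis A s.P := h.of_supf hNak s.f.hom s.supf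

lemma Syz.unis' (hNak : IsNakayama A) (s : Syz M K) (h : Unis A M) : Unis A K :=
  (s.unis hNak h).of_inj s.i.hom s.inj

lemma epi_of_mono (hNak : IsNakayama A) (s : Syz X X') (t : Syz Y Y') {u : X ⟶ Y} {a : X' ⟶ Y'} {b : s.P ⟶ t.P}
    (h1 : a ≫ t.i = s.i ≫ b) (h2 : b ≫ t.f = s.f ≫ u) (hY : Unis A Y) (hX : Nontrivial X)
    (hu : Mono u) : Epi a := by
  have hui := (ModuleCat.mono_iff_injective _).1 hu
  rw [ModuleCat.epi_iff_surjective]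
  intro y'
  rcases t.unis hNak hY (LinearMap.range b.hom) (LinearMap.range t.i.hom) with h | h
  · exfalso
    obtain ⟨x, hx⟩ := exists_ne (0 : X)
    apply hx
    apply hui
    obtain ⟨p, rfl⟩ := s.supf.1 x
    have h3 : t.f.hom (b.hom p) = u.hom (s.f.hom p) := congr_hom h2 p
    obtain ⟨y, hy⟩ := h ⟨p, rfl⟩
    rw [← hy, t.fi] at h3
    rw [map_zero]; exact h3.symm
  · obtain ⟨p, hp⟩ := h ⟨y', rfl⟩
    have h3 : t.f.hom (b.hom p) = u.hom (s.f.hom p) := congr_hom h2 p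
    rw [hp, t.fi] at h3
    have h4 : s.f.hom p = 0 := hui (by rw [map_zero]; exact h3.symm)
    obtain ⟨x', rfl⟩ := s.exact p h4
    refine ⟨x', t.inj ?_⟩
    rw [← hp]
    exact congr_hom h1 x'

lemma mono_of_epi (hNak : IsNakayama A) (s : Syz X X') (t : Syz Y Y') {u : X ⟶ Y} {a : X' ⟶ Y'} {b : s.P ⟶ t.P}
    (h1 : a ≫ t.i = s.i ≫ b) (h2 : b ≫ t.f = s.f ≫ u) (hX : Unis A X) (hY : Nontrivial Y)
    (hu : Epi u) : Mono a := by
  have hb := s.b_surj t hu h2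
  have := t.proj
  have hbe : Epi b := (ModuleCat.epi_iff_surjective _).2 hb
  have hr : Projective.factorThru (𝟙 _) b ≫ b = 𝟙 t.P := Projective.factorThru_comp _ _
  generalize Projective.factorThru (𝟙 _) b = r at hr
  have hr' : ∀ y, b.hom (r.hom y) = y := fun y => congr_hom hr y
  have hbi : Function.Injective b.hom := by
    rw [← LinearMap.ker_eq_bot, eq_bot_iff]
    rcases s.unis hNak hX (LinearMap.ker b.hom) (LinearMap.range r.hom) with h | h
    · intro x hx
      obtain ⟨y, rfl⟩ := h hx
      have h3 : b.hom (r.hom y) = 0 := hx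
      rw [hr'] at h3
      rw [h3, map_zero]; exact Submodule.zero_mem _
    · exfalso
      obtain ⟨y, hy⟩ := exists_ne (0 : Y)
      obtain ⟨p, rfl⟩ := t.supf.1 y
      apply hy
      have h3 : b.hom (r.hom p) = 0 := h ⟨p, rfl⟩
      rw [hr'] at h3
      rw [h3, map_zero]
  rw [ModuleCat.mono_iff_injective]
  intro x y hxy
  apply s.inj
  apply hbi
  have e1 : t.i.hom (a.hom x) = b.hom (s.i.hom x) := congr_hom h1 x
  have e2 : t.i.hom (a.hom y) = b.hom (s.i.hom y) := congr_hom h1 y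
  rw [← e1, ← e2]
  exact congrArg _ hxy

lemma exists_syz (_hNak : IsNakayama A) (h : Unis A M) : ∃ K, IsSyzygyOf A M K := by
  obtain ⟨P, f, hP, hf⟩ := exists_cover h
  refine ⟨kernel (ModuleCat.ofHom f : P ⟶ M), P, ModuleCat.ofHom f, cover_of_supf ?_ hf,
    ⟨Iso.refl _⟩⟩
  exact (IsProjective.iff_projective P).1 hP

lemma exists_nthSyz (hNak : IsNakayama A) (n : ℕ) : ∀ {M : ModuleCat.{0} A}, Unis A M → ∃ K, IsNthSyzygy A n M K := by
  induction n with
  | zero => intro M _; exact ⟨M, ⟨Iso.refl _⟩⟩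
  | succ n ih =>
    intro M hM
    obtain ⟨V, hV⟩ := exists_syz hNak hM
    obtain ⟨s⟩ := Syz.of hV
    obtain ⟨K, hK⟩ := ih (s.unis' hNak hM)
    exact ⟨K, V, hV, hK⟩

lemma nontrivial_of_le_projDim (_hNak : IsNakayama A) {z : ℕ} (hz : ((z + 1 : ℕ) : ℕ∞) ≤ projDim A M)
    (h : IsNthSyzygy A (z + 1) M X) : Nontrivial X := by
  by_contra hX
  rw [not_nontrivial_iff_subsingleton] at hX
  have h1 : projDim A M ≤ (z : ℕ∞) := sInf_le ⟨z, rfl, projDimLE_of_syz h hX⟩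
  have h2 := hz.trans h1
  norm_cast at h2
  omega

lemma chain (hNak : IsNakayama A) (n : ℕ) : ∀ (k : ℕ) {X Y : ModuleCat.{0} A} (u : X ⟶ Y), Unis A X → Unis A Y →
    Nontrivial X' → Nontrivial Y' → IsNthSyzygy A (n + 1) X X' → IsNthSyzygy A (n + 1) Y Y' →
    (Even k → Mono u) → (Odd k → Epi u) →
    ∃ (X₁ Y₁ : ModuleCat.{0} A) (u₁ : X₁ ⟶ Y₁), Unis A X₁ ∧ Unis A Y₁ ∧
      IsNthSyzygy A 1 X₁ X' ∧ IsNthSyzygy A 1 Y₁ Y' ∧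
      (Even (k + n) → Mono u₁) ∧ (Odd (k + n) → Epi u₁) ∧
      ∀ W, QQ 1 u₁ W → QQ (n + 1) u W := by
  induction n with
  | zero =>
    intro k X Y u hX hY hX' hY' h1 h2 hm he
    exact ⟨X, Y, u, hX, hY, h1, h2, hm, he, fun W h => h⟩
  | succ n ih =>
    intro k X Y u hX hY hX' hY' h1 h2 hm he
    have hXn := h1.nontrivial
    have hYn := h2.nontrivial
    obtain ⟨X₂, hX₂, h1⟩ := h1
    obtain ⟨Y₂, hY₂, h2⟩ := h2
    obtain ⟨s⟩ := Syz.of hX₂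
    obtain ⟨t⟩ := Syz.of hY₂
    obtain ⟨a, b, ha, hb⟩ := s.lift t u
    obtain ⟨X₁, Y₁, u₁, g1, g2, g3, g4, g5, g6, g7⟩ := ih (k + 1) a (s.unis' hNak hX)
      (t.unis' hNak hY) hX' hY' h1 h2
      (fun hk => mono_of_epi hNak s t ha hb hX hYn (he (by
        rcases Nat.even_or_odd k with h | h
        · exact absurd hk (by simpa using h.add_one)
        · exact h)))
      (fun hk => epi_of_mono hNak s t ha hb hY hXn (hm (by
        rcases Nat.even_or_odd k with h | h
        · exact h
        · exact absurd hk (by simpa using h.add_one))))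
    have hkn : k + 1 + n = k + (n + 1) := by omega
    rw [hkn] at g5 g6
    exact ⟨X₁, Y₁, u₁, g1, g2, g3, g4, g5, g6, fun W hW => QQ.succ s t ha hb (g7 W hW)⟩

lemma exists_cosyz (hNak : IsNakayama A) (n : ℕ) {u : X ⟶ Y} : ∀ {W : ModuleCat.{0} A}, Unis A W → QQ n u W →
    ∃ Z, IsNthCosyzygy A n W Z ∧ Unis A Z ∧ QQ 0 u Z := by
  induction n with
  | zero => intro W hW h; exact ⟨W, ⟨Iso.refl _⟩, hW, h⟩
  | succ n ih =>
    intro W hW h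
    obtain ⟨I, i, hI, hi⟩ := exists_envelope hNak hW
    have henv : IsInjectiveEnvelopeHom A (ModuleCat.ofHom i : W ⟶ I) := env_of_ess hI hi
    have := henv.2.1
    have hIu : Unis A I := hW.of_ess hNak i hi
    have hCu : Unis A ↥(cokernel (C := ModuleCat.{0} A) (ModuleCat.ofHom i : W ⟶ I)) :=
      hIu.of_surj (cokernel.π (ModuleCat.ofHom i : W ⟶ I)).hom
        ((ModuleCat.epi_iff_surjective _).1 inferInstance)
    obtain ⟨Z, h1, h2, h3⟩ := ih hCu (h.cosyz (ModuleCat.ofHom i : W ⟶ I))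
    exact ⟨Z, ⟨_, ⟨I, _, henv, ⟨Iso.refl _⟩⟩, h1⟩, h2, h3⟩

lemma cosyz_conclusion (hNak : IsNakayama A) {n : ℕ} {T I W : ModuleCat.{0} A} (hT : IsSimpleModule A T) (j : T ⟶ I)
    (hj : IsInjectiveEnvelopeHom A j) (hW : Unis A W) (h : QQ n j W) : IsNthCosyzygy A n W I := by
  obtain ⟨Z, h1, hZ, θ, hθ⟩ := exists_cosyz hNak n hW h
  obtain ⟨g, rfl⟩ := (Ext.mk₀_bijective _ _).2 θ
  have hjg : j ≫ g ≠ 0 := by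
    intro h0
    apply hθ
    rw [Ext.mk₀_comp_mk₀, h0, Ext.mk₀_zero]
  have hjm : Mono (j ≫ g) := by
    rw [ModuleCat.mono_iff_injective]
    rcases LinearMap.injective_or_eq_zero (j ≫ g).hom with h | h
    · exact h
    · exact absurd (ModuleCat.hom_ext h) hjg
  have hgm : Mono g := hj.2.2 _ _ hjm
  have hgi := (ModuleCat.mono_iff_injective _).1 hgm
  have := hj.1
  have hr : g ≫ Injective.factorThru (𝟙 I) g = 𝟙 I := Injective.comp_factorThru _ _
  generalize Injective.factorThru (𝟙 I) g = r at hr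
  have hr' : ∀ x, r.hom (g.hom x) = x := fun x => congr_hom hr x
  have hge : Epi g := by
    rw [ModuleCat.epi_iff_surjective]
    intro z
    rcases hZ (LinearMap.ker r.hom) (LinearMap.range g.hom) with hle | hle
    · have h3 : z - g.hom (r.hom z) ∈ LinearMap.ker r.hom := by
        rw [LinearMap.mem_ker, map_sub, hr', sub_self]
      obtain ⟨y, hy⟩ := hle h3
      refine ⟨y + r.hom z, ?_⟩
      rw [map_add]
      rw [hy, sub_add_cancel]
    · exfalso
      apply hjg
      have : g = 0 := by
        ext x
        have h3 : r.hom (g.hom x) = 0 := hle ⟨x, rfl⟩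
        rw [hr'] at h3
        rw [h3, map_zero, map_zero]
      rw [this, comp_zero]
  have := isIso_of_mono_of_epi g
  exact IsNthCosyzygy.congr (asIso g) h1

end Nak

lemma extChain {n : ℕ} : ∀ {M : ModuleCat.{0} A}, IsNthSyzygy A (n + 1) M X →
    ∃ M₁, IsNthSyzygy A 1 M₁ X ∧ ∀ W, QQ 1 (𝟙 M₁) W → QQ (n + 1) (𝟙 M) W := by
  induction n with
  | zero => intro M h; exact ⟨M, h, fun W h => h⟩
  | succ n ih =>
    rintro M ⟨V, hV, h⟩
    obtain ⟨M₁, h1, h2⟩ := ih h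
    obtain ⟨s⟩ := Syz.of hV
    exact ⟨M₁, h1, fun W hW => QQ.succ s s (b := 𝟙 _) (by simp) (by simp) (h2 W hW)⟩

lemma IsNthSyzygy.syz (h : IsNthSyzygy A 1 M X) : Nonempty (Syz M X) := by
  obtain ⟨V, ⟨P, f, hf, ⟨e⟩⟩, ⟨e'⟩⟩ := h
  exact Syz.of ⟨P, f, hf, ⟨e' ≪≫ e⟩⟩

lemma Syz.simple_zero (s : Syz M K) {S : ModuleCat.{0} A} (hS : IsSimpleModule A S)
    (h : s.P ⟶ S) : s.i ≫ h = 0 := by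
  rcases LinearMap.surjective_or_eq_zero (s.i ≫ h).hom with hs | h0
  · have h1 : LinearMap.ker h.hom = ⊤ := by
      apply s.supf.2
      rw [eq_top_iff]
      rintro m -
      obtain ⟨p, rfl⟩ := s.supf.1 m
      obtain ⟨k, hk⟩ := hs (h.hom p)
      have hk' : h.hom (s.i.hom k) = h.hom p := hk
      refine ⟨p - s.i.hom k, ?_, ?_⟩
      · show h.hom (p - s.i.hom k) = 0
        rw [map_sub, hk', sub_self]
      · rw [map_sub, s.fi, sub_zero]
    have h2 : h = 0 := ModuleCat.hom_ext (LinearMap.ker_eq_top.1 h1)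
    rw [h2, comp_zero]
  · exact ModuleCat.hom_ext h0

lemma Syz.not_split (s : Syz M K) (hK : Nontrivial K) (h : s.P ⟶ K) : s.i ≫ h ≠ 𝟙 K := by
  intro hs
  have hs' : ∀ k, h.hom (s.i.hom k) = k := fun k => congr_hom hs k
  have h1 : LinearMap.ker h.hom = ⊤ := by
    apply s.supf.2
    rw [eq_top_iff]
    rintro m -
    obtain ⟨p, rfl⟩ := s.supf.1 m
    refine ⟨p - s.i.hom (h.hom p), ?_, ?_⟩
    · show h.hom (p - s.i.hom (h.hom p)) = 0
      rw [map_sub, hs', sub_self]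
    · rw [map_sub, s.fi, sub_zero]
  obtain ⟨k, hk⟩ := exists_ne (0 : K)
  apply hk
  rw [← hs' k]
  have : s.i.hom k ∈ LinearMap.ker h.hom := h1 ▸ Submodule.mem_top
  exact this

lemma unis_simple {S : ModuleCat.{0} A} (hS : IsSimpleModule A S) : Unis A S := by
  intro N₁ N₂
  rcases eq_bot_or_eq_top N₁ with h | h
  · left; rw [h]; exact bot_le
  · right; rw [h]; exact le_top

lemma base_even [IsArtinianRing A] [IsNoetherianRing A] (hNak : IsNakayama A)
    (s : Syz X X') (t : Syz Y Y') (u : X ⟶ Y) (hu : Epi u) (hX : Unis A X) (hY : Unis A Y)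
    (hX' : Nontrivial X') (hY' : Nontrivial Y') (hYn : Nontrivial Y) : QQ 1 u Y' := by
  obtain ⟨a, b, ha, hb⟩ := s.lift t u
  have ham := (ModuleCat.mono_iff_injective _).1 (mono_of_epi hNak s t ha hb hX hYn hu)
  refine QQ.one s t ha hb (𝟙 _) (fun h hh => ?_)
  rw [Category.comp_id] at hh
  have hh' : ∀ x, h.hom (s.i.hom x) = a.hom x := fun x => congr_hom hh x
  have hinj : Function.Injective h.hom := by
    rw [← LinearMap.ker_eq_bot, eq_bot_iff]
    rcases s.unis hNak hX (LinearMap.ker h.hom) (LinearMap.range s.i.hom) with hle | hle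
    · intro p hp
      obtain ⟨x, rfl⟩ := hle hp
      have h3 : h.hom (s.i.hom x) = 0 := hp
      rw [hh'] at h3
      have : x = 0 := ham (by rw [map_zero]; exact h3)
      rw [this, map_zero]; exact Submodule.zero_mem _
    · exfalso
      obtain ⟨x, hx⟩ := exists_ne (0 : X')
      apply hx
      apply ham
      have h3 : h.hom (s.i.hom x) = 0 := hle ⟨x, rfl⟩
      rw [hh'] at h3
      rw [map_zero]; exact h3
  have hbs := s.b_surj t hu hb
  have hl1 := Module.length_le_of_injective h.hom hinj
  have hl2 := Module.length_le_of_surjective b.hom hbs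
  obtain ⟨e, he⟩ := (t.unis hNak hY).exists_surj
  have : IsArtinian A t.P := isArtinian_of_surjective _ e he
  have : IsNoetherian A t.P := isNoetherian_of_surjective e (LinearMap.range_eq_top.2 he)
  have hsur := surj_of_length t.i.hom t.inj (hl2.trans hl1)
  obtain ⟨y, hy⟩ := exists_ne (0 : Y)
  obtain ⟨p, rfl⟩ := t.supf.1 y
  obtain ⟨q, rfl⟩ := hsur p
  exact hy (t.fi q)

lemma base_odd [IsArtinianRing A] [IsNoetherianRing A] (hNak : IsNakayama A) {S : ModuleCat.{0} A}
    (hS : IsSimpleModule A S)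
    (s : Syz X X') (t : Syz Y Y') (u : X ⟶ Y) (hu : Mono u) (hY : Unis A Y)
    (hY' : Nontrivial Y') (hXn : Nontrivial X) (q : X' ⟶ S) (hq : Supf q.hom) : QQ 1 u S := by
  obtain ⟨a, b, ha, hb⟩ := s.lift t u
  have hae := epi_of_mono hNak s t ha hb hY hXn hu
  have has := (ModuleCat.epi_iff_surjective _).1 hae
  have hker : LinearMap.ker a.hom ≤ LinearMap.ker q.hom := by
    by_contra hcon
    have h1 : (LinearMap.ker a.hom).map q.hom = ⊤ := by
      rcases eq_bot_or_eq_top ((LinearMap.ker a.hom).map q.hom) with h | h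
      · exact absurd ((Submodule.map_le_iff_le_comap).1 h.le) hcon
      · exact h
    have h2 := hq.2 _ h1
    obtain ⟨y, hy⟩ := exists_ne (0 : Y')
    obtain ⟨x, rfl⟩ := has y
    apply hy
    have : x ∈ LinearMap.ker a.hom := h2 ▸ Submodule.mem_top
    exact this
  have hw : kernel.ι a ≫ q = 0 := by
    ext x
    have h1 : a.hom ((kernel.ι a).hom x) = 0 := congr_hom (kernel.condition a) x
    exact hker h1
  refine QQ.one s t ha hb (Abelian.epiDesc a q hw) (fun h hh => ?_)
  rw [Abelian.comp_epiDesc, s.simple_zero hS] at hh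
  have := hS.nontrivial
  obtain ⟨y, hy⟩ := exists_ne (0 : S)
  obtain ⟨x, rfl⟩ := hq.1 y
  apply hy
  rw [← hh]; rfl

end CatPart

end ArtinAlg

open ArtinAlg in
/-- Let `A` be a Nakayama algebra, `S` and `T` simple modules and
`z ∈ ℕ`. (a) If `z` is even, `Ω^z (I T) = P S` and `pd T ≥ z`, then `Σ^z (P S) = I T`
and `id S ≥ z`. (b) If `z` is odd, `Ω^z T = P S` and `pd (I T) ≥ z`, then
`Σ^z S = I T` and `id (P S) ≥ z`. -/
theorem statement_16 (R : Type) [CommRing R] [IsArtinianRing R]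
    (A : Type) [Ring A] [Algebra R A] [Module.Finite R A]
    (hNak : IsNakayama A)
    (S T : ModuleCat.{0} A) (hS : IsSimpleModule A ↥S) (hT : IsSimpleModule A ↥T)
    (z : ℕ) (I P : ModuleCat.{0} A) (hI : IsInjEnvOf A T I) (hP : IsProjCoverOf A S P) :
    (Even z → IsNthSyzygy A z I P → (z : ℕ∞) ≤ projDim A T →
      IsNthCosyzygy A z P I ∧ (z : ℕ∞) ≤ injDim A S) ∧
    (Odd z → IsNthSyzygy A z T P → (z : ℕ∞) ≤ projDim A I →
      IsNthCosyzygy A z S I ∧ (z : ℕ∞) ≤ injDim A P) := by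

  have hArt : IsArtinianRing A := isArtinian_of_tower R inferInstance
  have hNoe : IsNoetherianRing A := isNoetherian_of_tower R inferInstance
  obtain ⟨j, hj⟩ := hI
  obtain ⟨q, hq⟩ := hP
  have hqs := supf_of_cover hq
  have hTu := unis_simple hT
  have hSu := unis_simple hS
  have hPu : Unis A P := hSu.of_supf hNak q.hom hqs
  have hIu : Unis A I := hTu.of_ess hNak j.hom (ess_of_env hj)
  have hSn : Nontrivial S := hS.nontrivial
  have hPn : Nontrivial P := hqs.1.nontrivial
  have hq0 : q ≠ 0 := by
    rintro rfl
    obtain ⟨y, hy⟩ := exists_ne (0 : S)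
    obtain ⟨x, rfl⟩ := hqs.1 y
    exact hy rfl
  constructor
  · intro hz hIP hpd
    rcases z with _ | n
    · obtain ⟨e⟩ := hIP
      exact ⟨⟨e.symm⟩, by simp⟩
    · obtain ⟨X', hX'⟩ := exists_nthSyz hNak (n + 1) hTu
      have hX'n := nontrivial_of_le_projDim hNak hpd hX'
      constructor
      · obtain ⟨X₁, Y₁, u₁, g1, g2, g3, g4, -, g6, g7⟩ := chain hNak n 0 j hTu hIu hX'n hPn hX' hIP
          (fun _ => hj.2.1) (fun h => absurd h (by simp))
        have hodd : Odd (0 + n) := by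
          rw [zero_add]
          rcases Nat.even_or_odd n with h | h
          · exact absurd hz (by simpa using h.add_one)
          · exact h
        obtain ⟨s⟩ := g3.syz
        obtain ⟨t⟩ := g4.syz
        exact cosyz_conclusion hNak hT j hj hPu
          (g7 P (base_even hNak s t u₁ (g6 hodd) g1 g2 hX'n hPn g4.nontrivial))
      · obtain ⟨M₁, h1, h2⟩ := extChain hIP
        obtain ⟨s⟩ := h1.syz
        refine le_injDim (h2 S (QQ.one s s (a := 𝟙 _) (b := 𝟙 _) (by simp) (by simp) q ?_))
        intro g hg
        rw [s.simple_zero hS, Category.id_comp] at hg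
        exact hq0 hg.symm
  · intro hz hTP hpd
    rcases z with _ | n
    · exact absurd hz (by simp)
    · obtain ⟨Y', hY'⟩ := exists_nthSyz hNak (n + 1) hIu
      have hY'n := nontrivial_of_le_projDim hNak hpd hY'
      constructor
      · obtain ⟨X₁, Y₁, u₁, g1, g2, g3, g4, g5, -, g7⟩ := chain hNak n 0 j hTu hIu hPn hY'n hTP hY'
          (fun _ => hj.2.1) (fun h => absurd h (by simp))
        have heven : Even (0 + n) := by
          rw [zero_add]
          rcases Nat.even_or_odd n with h | h
          · exact h
          · exact absurd hz (by simpa using h.add_one)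
        obtain ⟨s⟩ := g3.syz
        obtain ⟨t⟩ := g4.syz
        exact cosyz_conclusion hNak hT j hj hSu
          (g7 S (base_odd hNak hS s t u₁ (g5 heven) g2 hY'n g3.nontrivial q hqs))
      · obtain ⟨M₁, h1, h2⟩ := extChain hTP
        obtain ⟨s⟩ := h1.syz
        refine le_injDim (h2 P (QQ.one s s (a := 𝟙 _) (b := 𝟙 _) (by simp) (by simp) (𝟙 P) ?_))
        intro g hg
        rw [Category.id_comp] at hg
        exact s.not_split hPn g hg
end
end

section
/- Let A be a Nakayama algebra, E the set of isomorphism classes of simple modules, and define h(S) = top(Ω^{e(S)} NS) and h*(S) = soc(Σ^{e*(S)} N*S). Then h is a permutation of E with inverse h*, and e*(h(S)) = e(S) for every simple module S. -/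
open CategoryTheory CategoryTheory.Limits

noncomputable section

namespace NakComb

/-- Combinatorial description of `e(s) = e` and `h(s) = t`. -/
def Ch (p q : ℤ → ℤ) (e : ℕ) (s t : ℤ) : Prop :=
  (∃ k : ℕ, e = 2 * k ∧ (∀ j < k, p^[j] (s + 1) < p^[j + 1] (q (s + 1))) ∧
    (∀ j < k, p^[j + 1] s < p^[j + 1] (s + 1)) ∧
    p^[k] (s + 1) = p^[k + 1] (q (s + 1)) ∧ t = p^[k] (q (s + 1))) ∨
  (∃ k : ℕ, e = 2 * k + 1 ∧ (∀ j ≤ k, p^[j] (s + 1) < p^[j + 1] (q (s + 1))) ∧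
    (∀ j < k, p^[j + 1] s < p^[j + 1] (s + 1)) ∧
    p^[k + 1] s = p^[k + 1] (s + 1) ∧ t = p^[k] (s + 1))

/-- The dual description of `e*(t) = e` and `h*(t) = s`. -/
def ChS (p q : ℤ → ℤ) (e : ℕ) (t s : ℤ) : Prop :=
  (∃ k : ℕ, e = 2 * k ∧ (∀ j < k, q^[j + 1] (p t) < q^[j] t) ∧
    (∀ j < k, q^[j + 1] t < q^[j + 1] (t + 1)) ∧
    q^[k + 1] (p t) = q^[k] t ∧ s + 1 = q^[k] (p t)) ∨
  (∃ k : ℕ, e = 2 * k + 1 ∧ (∀ j ≤ k, q^[j + 1] (p t) < q^[j] t) ∧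
    (∀ j < k, q^[j + 1] t < q^[j + 1] (t + 1)) ∧
    q^[k + 1] t = q^[k + 1] (t + 1) ∧ s + 1 = q^[k] t)

/-- Conjugate by negation. -/
def ng (p : ℤ → ℤ) : ℤ → ℤ := fun a => - p (-a)

theorem ng_ng (p : ℤ → ℤ) : ng (ng p) = p := by
  funext a; simp [ng]

theorem ng_iter (p : ℤ → ℤ) (k : ℕ) (a : ℤ) : (ng p)^[k] a = - p^[k] (-a) := by
  induction k generalizing a with
  | zero => simp
  | succ k ih => rw [Function.iterate_succ_apply, Function.iterate_succ_apply, ih]; simp [ng]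

theorem ChS_iff (p q : ℤ → ℤ) (e : ℕ) (t s : ℤ) :
    ChS p q e t s ↔ Ch (ng q) (ng p) e (-t - 1) (-s - 1) := by
  unfold ChS Ch
  have h1 : -t - 1 + 1 = -t := by ring
  have h2 : -(-t - 1) = t + 1 := by ring
  have h3 : ng p (-t) = - p t := by simp [ng]
  have h4 : ∀ a : ℤ, (-s - 1 = -a ↔ s + 1 = a) := by intro a; omega
  simp only [h1, h3, ng_iter, h2, neg_neg, neg_lt_neg_iff, neg_inj, h4]
  simp only [eq_comm]

theorem gc_ng {p q : ℤ → ℤ} (gc : GaloisConnection q p) : GaloisConnection (ng p) (ng q) := by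
  intro a b
  have := gc (-b) (-a)
  simp only [ng]
  constructor
  · intro h; have := this.2 (by linarith); linarith
  · intro h; have := this.1 (by linarith); linarith

theorem gc_iter {p q : ℤ → ℤ} (gc : GaloisConnection q p) (k : ℕ) :
    GaloisConnection q^[k] p^[k] := by
  induction k with
  | zero => exact GaloisConnection.id
  | succ k ih =>
    intro a b
    rw [Function.iterate_succ_apply, Function.iterate_succ_apply', ih _ _, gc _ _]

theorem iter_add_apply (f : ℤ → ℤ) (m n : ℕ) (x : ℤ) : f^[m] (f^[n] x) = f^[m + n] x :=
  (Function.iterate_add_apply f m n x).symm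

/-- If `p^j (y-1) < p^j y` then `q^j (p^j y) = y`. -/
theorem qp_eq {p q : ℤ → ℤ} (gc : GaloisConnection q p) (j : ℕ) (y : ℤ)
    (h : p^[j] (y - 1) < p^[j] y) : q^[j] (p^[j] y) = y := by
  have g := gc_iter gc j
  apply le_antisymm
  · exact g.l_u_le y
  · by_contra hc
    have h1 : q^[j] (p^[j] y) ≤ y - 1 := by omega
    have := (g _ _).1 h1
    omega

/-- One-sided version. -/
theorem qp_le {p q : ℤ → ℤ} (gc : GaloisConnection q p) (k j : ℕ) (hj : j ≤ k) (y : ℤ) :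
    q^[j] (p^[k] y) ≤ p^[k - j] y := by
  rw [(gc_iter gc j) _ _, iter_add_apply, Nat.add_sub_cancel' hj]

theorem lt_q {p q : ℤ → ℤ} (gc : GaloisConnection q p) (j : ℕ) (v t : ℤ) (h : p^[j] v < t) :
    v < q^[j] t := by
  by_contra hc
  push Not at hc
  have := ((gc_iter gc j) _ _).1 hc
  omega

theorem Ch_to_ChS {p q : ℤ → ℤ} (gc : GaloisConnection q p) {e : ℕ} {s t : ℤ}
    (h : Ch p q e s t) : ChS p q e t s := by
  have hpr : p (q (s + 1) - 1) ≤ s := by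
    by_contra hc
    have : q (s + 1) ≤ q (s + 1) - 1 := (gc _ _).2 (by omega)
    omega
  have mono : ∀ k, Monotone p^[k] := fun k => (gc_iter gc k).monotone_u
  have lu : ∀ k y, y ≤ p^[k] (q^[k] y) := fun k y => (gc_iter gc k).le_u_l y
  rcases h with ⟨k, rfl, h1, h2, h3, h4⟩ | ⟨k, rfl, h1, h2, h3, h4⟩
  · left
    refine ⟨k, rfl, ?_⟩
    set r := q (s + 1) with hr
    have hs : p^[k] (s + 1 - 1) < p^[k] (s + 1) := by
      rcases k with _ | k
      · simp
      · simpa using h2 k (by omega)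
    have hrr : p^[k] (r - 1) < p^[k] r := by
      rcases k with _ | k
      · simp
      · have a1 := h1 k (by omega)
        have a2 : p^[k + 1] (r - 1) ≤ p^[k] s := by
          rw [Function.iterate_succ_apply]; exact mono k hpr
        have a3 : p^[k] s ≤ p^[k] (s + 1) := mono k (by omega)
        omega
    have hpt : p t = p^[k] (s + 1) := by
      rw [h3, h4, Function.iterate_succ_apply']
    have hq1 : ∀ j ≤ k, q^[j] t ≤ p^[k - j] r := fun j hj => by
      rw [h4]; exact qp_le gc k j hj r
    have hq2 : ∀ j ≤ k, q^[j] (p t) ≤ p^[k - j] (s + 1) := fun j hj => by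
      rw [hpt]; exact qp_le gc k j hj _
    have hqk1 : q^[k] t = r := by rw [h4]; exact qp_eq gc k r hrr
    have hqk2 : q^[k] (p t) = s + 1 := by rw [hpt]; exact qp_eq gc k _ hs
    refine ⟨?_, ?_, ?_, ?_⟩
    · intro j hj
      apply lt_of_le_of_lt (hq2 (j + 1) hj)
      apply lt_q gc
      rw [iter_add_apply, h4]
      have := h1 (k - 1) (by omega)
      rwa [show k - 1 + 1 = k by omega, show k - 1 = j + (k - (j + 1)) by omega] at this
    · intro j hj
      apply lt_q gc
      have a2 := mono (j + 1) (hq1 (j + 1) hj)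
      rw [iter_add_apply, show j + 1 + (k - (j + 1)) = k by omega, ← h4] at a2
      omega
    · rw [Function.iterate_succ_apply', hqk2, hqk1]
    · rw [hqk2]
  · right
    refine ⟨k, rfl, ?_⟩
    set r := q (s + 1) with hr
    have hs : p^[k] (s + 1 - 1) < p^[k] (s + 1) := by
      rcases k with _ | k
      · simp
      · simpa using h2 k (by omega)
    have hpt : p t = p^[k + 1] s := by
      rw [h3, h4, Function.iterate_succ_apply']
    have hq1 : ∀ j ≤ k, q^[j] t ≤ p^[k - j] (s + 1) := fun j hj => by
      rw [h4]; exact qp_le gc k j hj _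
    have hqk1 : q^[k] t = s + 1 := by rw [h4]; exact qp_eq gc k _ hs
    have hmq : ∀ k, Monotone q^[k] := fun k => (gc_iter gc k).monotone_l
    refine ⟨?_, ?_, ?_, ?_⟩
    · intro j hj
      have a1 : q^[j + 1] (p t) ≤ p^[k - j] s := by
        rw [hpt]
        have := qp_le gc (k + 1) (j + 1) (by omega) s
        rwa [show k + 1 - (j + 1) = k - j by omega] at this
      apply lt_of_le_of_lt a1
      apply lt_q gc
      rw [iter_add_apply, h4, show j + (k - j) = k by omega]
      simpa using hs
    · intro j hj
      apply lt_q gc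
      have a2 := mono (j + 1) (hq1 (j + 1) hj)
      rw [iter_add_apply, show j + 1 + (k - (j + 1)) = k by omega, ← h4] at a2
      omega
    · apply le_antisymm
      · exact hmq _ (by omega)
      · rw [Function.iterate_succ_apply' q k t, hqk1]
        rw [← hr, (gc_iter gc (k + 1)) _ _]
        have := h1 k le_rfl
        omega
    · rw [hqk1]

theorem Ch_iff_ChS {p q : ℤ → ℤ} (gc : GaloisConnection q p) {e : ℕ} {s t : ℤ} :
    Ch p q e s t ↔ ChS p q e t s := by
  refine ⟨Ch_to_ChS gc, fun h => ?_⟩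
  have h1 := Ch_to_ChS (gc_ng gc) ((ChS_iff p q e t s).1 h)
  have h2 := (ChS_iff _ _ _ _ _).1 h1
  simpa [ng_ng] using h2

theorem Ch_exists {p q : ℤ → ℤ} (gc : GaloisConnection q p) (n : ℕ) (hn : 0 < n)
    (hp : ∀ x, p (x + n) = p x + n) (s : ℤ) : ∃ e t, Ch p q e s t := by
  have hpr : p (q (s + 1) - 1) ≤ s := by
    by_contra hc
    have : q (s + 1) ≤ q (s + 1) - 1 := (gc _ _).2 (by omega)
    omega
  have mono : ∀ k, Monotone p^[k] := fun k => (gc_iter gc k).monotone_u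
  set r := q (s + 1) with hr
  have hle1 : ∀ k, p^[k] (s + 1) ≤ p^[k + 1] r := fun k => by
    rw [Function.iterate_succ_apply]; exact mono k (gc.le_u_l _)
  have hle2 : ∀ k, p^[k] s ≤ p^[k] (s + 1) := fun k => mono k (by omega)
  classical
  by_cases hex : ∃ k, p^[k] (s + 1) = p^[k + 1] r ∨ p^[k + 1] s = p^[k + 1] (s + 1)
  · obtain ⟨hk, hmin⟩ := And.intro (Nat.find_spec hex) (fun m => Nat.find_min (m := m) hex)
    set k := Nat.find hex
    have m1 : ∀ j < k, p^[j] (s + 1) < p^[j + 1] r := fun j hj =>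
      lt_of_le_of_ne (hle1 j) (fun h => hmin j hj (Or.inl h))
    have m2 : ∀ j < k, p^[j + 1] s < p^[j + 1] (s + 1) := fun j hj =>
      lt_of_le_of_ne (hle2 _) (fun h => hmin j hj (Or.inr h))
    by_cases h : p^[k] (s + 1) = p^[k + 1] r
    · exact ⟨2 * k, _, Or.inl ⟨k, rfl, m1, m2, h, rfl⟩⟩
    · refine ⟨2 * k + 1, _, Or.inr ⟨k, rfl, ?_, m2, hk.resolve_left h, rfl⟩⟩
      intro j hj
      rcases hj.lt_or_eq with h' | rfl
      · exact m1 j h'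
      · exact lt_of_le_of_ne (hle1 _) h
  · exfalso
    push Not at hex
    have m1 : ∀ j, p^[j] (s + 1) < p^[j + 1] r := fun j =>
      lt_of_le_of_ne (hle1 j) (hex j).1
    have m2 : ∀ j, p^[j] s < p^[j] (s + 1) := fun j => by
      rcases j with _ | j
      · simp
      · exact lt_of_le_of_ne (hle2 _) (hex j).2
    have hpz : ∀ (m : ℤ) x, p (x + n * m) = p x + n * m := by
      intro m
      induction m using Int.induction_on with
      | zero => simp
      | succ i ih =>
        intro x
        rw [show x + (n : ℤ) * (i + 1) = (x + n * i) + n by ring, hp, ih]; ring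
      | pred i ih =>
        intro x
        have := hp (x + n * (-i - 1))
        rw [show x + (n : ℤ) * (-i - 1) + n = x + n * (-i) by ring, ih] at this
        linarith
    have hpk : ∀ (k : ℕ) (m : ℤ) x, p^[k] (x + n * m) = p^[k] x + n * m := by
      intro k
      induction k with
      | zero => simp
      | succ k ih => intro m x; rw [Function.iterate_succ_apply, hpz, ih, ← Function.iterate_succ_apply]
    let D : ℕ → Set (ZMod n) := fun k => {c | ∃ x : ℤ, ((p^[k] x : ℤ) : ZMod n) = c}
    have : NeZero n := ⟨hn.ne'⟩
    have hD : StrictAnti D := by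
      apply strictAnti_nat_of_succ_lt
      intro k
      refine ⟨?_, ?_⟩
      · rintro c ⟨x, rfl⟩
        exact ⟨p x, by rw [← Function.iterate_succ_apply]⟩
      · intro hsub
        obtain ⟨x, hx⟩ := hsub ⟨s + 1, rfl⟩
        rw [eq_comm, ZMod.intCast_eq_intCast_iff_dvd_sub] at hx
        obtain ⟨m, hm⟩ := hx
        have e1 : p^[k + 1] (x + n * (-m)) = p^[k] (s + 1) := by rw [hpk]; linarith
        set y := x + n * (-m)
        have a1 : p^[k + 1] (r - 1) ≤ p^[k] s := by
          rw [Function.iterate_succ_apply]; exact mono k hpr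
        rcases le_or_gt r y with h | h
        · have := mono (k + 1) h
          have := m1 k
          omega
        · have := mono (k + 1) (show y ≤ r - 1 by omega)
          have := m2 k
          omega
    exact not_strictAnti_of_wellFoundedLT D hD

theorem ChS_exists {p q : ℤ → ℤ} (gc : GaloisConnection q p) (n : ℕ) (hn : 0 < n)
    (hp : ∀ x, p (x + n) = p x + n) (t : ℤ) : ∃ e s, ChS p q e t s := by
  have hq : ∀ x, ng q (x + n) = ng q x + n := by
    intro x
    have hpm : ∀ x, p (x - n) = p x - n := fun x => by
      have := hp (x - n); simp at this; linarith
    have key : ∀ y, q (y - n) = q y - n := by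
      intro y
      apply le_antisymm
      · rw [gc, hpm]; have := gc.le_u_l y; linarith
      · have : q y ≤ q (y - n) + n := by
          rw [gc, hp]; have := gc.le_u_l (y - n); linarith
        linarith
    simp only [ng]
    rw [show -(x + (n : ℤ)) = -x - n by ring, key]; ring
  obtain ⟨e, u, h⟩ := Ch_exists (gc_ng gc) n hn hq (-t - 1)
  refine ⟨e, -u - 1, (ChS_iff _ _ _ _ _).2 ?_⟩
  simpa using h

end NakComb

namespace Nak

section Uniserial

variable {A : Type} [Ring A]

/-- Submodules form a chain. -/
def Uni (A : Type) [Ring A] (M : Type) [AddCommGroup M] [Module A M] : Prop :=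
  ∀ N₁ N₂ : Submodule A M, N₁ ≤ N₂ ∨ N₂ ≤ N₁

variable {M N X S T : Type} [AddCommGroup M] [Module A M] [AddCommGroup N] [Module A N]
  [AddCommGroup X] [Module A X] [AddCommGroup S] [Module A S] [AddCommGroup T] [Module A T]

theorem Uni.of_injective (f : N →ₗ[A] M) (hf : Function.Injective f) (h : Uni A M) : Uni A N := by
  intro N₁ N₂
  rcases h (N₁.map f) (N₂.map f) with h | h
  · left; exact (Submodule.map_le_map_iff_of_injective hf _ _).1 h
  · right; exact (Submodule.map_le_map_iff_of_injective hf _ _).1 h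

theorem Uni.of_surjective (f : M →ₗ[A] N) (hf : Function.Surjective f) (h : Uni A M) :
    Uni A N := by
  intro N₁ N₂
  rcases h (N₁.comap f) (N₂.comap f) with h | h
  · left; exact (Submodule.comap_le_comap_iff_of_surjective hf).1 h
  · right; exact (Submodule.comap_le_comap_iff_of_surjective hf).1 h

theorem ker_coatom [IsSimpleModule A S] (f : M →ₗ[A] S) (hf : Function.Surjective f) :
    IsCoatom (LinearMap.ker f) := by
  rw [← isSimpleModule_iff_isCoatom]
  exact IsSimpleModule.congr (f.quotKerEquivOfSurjective hf)

theorem range_atom [IsSimpleModule A S] (f : S →ₗ[A] M) (hf : Function.Injective f) :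
    IsAtom (LinearMap.range f) := by
  rw [← isSimpleModule_iff_isAtom]
  exact IsSimpleModule.congr (LinearEquiv.ofInjective f hf).symm

theorem Uni.le_ker [IsSimpleModule A S] (h : Uni A M) (f : M →ₗ[A] S)
    (hf : Function.Surjective f) (N : Submodule A M) : N ≤ LinearMap.ker f ∨ N = ⊤ := by
  rcases h N (LinearMap.ker f) with h | h
  · exact Or.inl h
  · rcases (ker_coatom f hf).le_iff.1 h with h | h
    · exact Or.inr h
    · exact Or.inl h.le

theorem Uni.range_le [IsSimpleModule A S] (h : Uni A M) (f : S →ₗ[A] M)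
    (hf : Function.Injective f) (N : Submodule A M) : LinearMap.range f ≤ N ∨ N = ⊥ := by
  rcases h (LinearMap.range f) N with h | h
  · exact Or.inl h
  · rcases (range_atom f hf).le_iff.1 h with h | h
    · exact Or.inr h
    · exact Or.inl h.ge

/-- A map to a uniserial module, surjective after composing to the top, is surjective. -/
theorem Uni.surj_of_comp [IsSimpleModule A S] (h : Uni A M) (f : M →ₗ[A] S)
    (hf : Function.Surjective f) (g : X →ₗ[A] M) (hg : Function.Surjective (f ∘ₗ g)) :
    Function.Surjective g := by
  rw [← LinearMap.range_eq_top]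
  rcases h.le_ker f hf (LinearMap.range g) with h | h
  · exfalso
    have hnt := IsSimpleModule.nontrivial A S
    obtain ⟨s, hs⟩ := exists_ne (0 : S)
    obtain ⟨x, hx⟩ := hg s
    apply hs
    rw [← hx]
    exact h ⟨x, rfl⟩
  · exact h

theorem Uni.inj_of_comp [IsSimpleModule A S] (h : Uni A M) (f : S →ₗ[A] M)
    (hf : Function.Injective f) (g : M →ₗ[A] X) (hg : Function.Injective (g ∘ₗ f)) :
    Function.Injective g := by
  rw [← LinearMap.ker_eq_bot]
  rcases h.range_le f hf (LinearMap.ker g) with h | h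
  · exfalso
    have hnt := IsSimpleModule.nontrivial A S
    obtain ⟨s, hs⟩ := exists_ne (0 : S)
    apply hs
    apply hg
    have : f s ∈ LinearMap.ker g := h ⟨s, rfl⟩
    simpa using this
  · exact h

theorem Uni.top_unique [IsSimpleModule A S] [IsSimpleModule A T] (h : Uni A M)
    (f : M →ₗ[A] S) (hf : Function.Surjective f) (g : M →ₗ[A] T) (hg : Function.Surjective g) :
    Nonempty (S ≃ₗ[A] T) := by
  have hk : LinearMap.ker f = LinearMap.ker g := by
    rcases h.le_ker g hg (LinearMap.ker f) with h' | h'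
    · rcases (ker_coatom f hf).le_iff.1 h' with h'' | h''
      · exact absurd h'' (ker_coatom g hg).1
      · exact h''.symm
    · exact absurd h' (ker_coatom f hf).1
  exact ⟨(f.quotKerEquivOfSurjective hf).symm.trans
    ((Submodule.quotEquivOfEq _ _ hk).trans (g.quotKerEquivOfSurjective hg))⟩

theorem Uni.soc_unique [IsSimpleModule A S] [IsSimpleModule A T] (h : Uni A M)
    (f : S →ₗ[A] M) (hf : Function.Injective f) (g : T →ₗ[A] M) (hg : Function.Injective g) :
    Nonempty (S ≃ₗ[A] T) := by
  have hk : LinearMap.range f = LinearMap.range g := by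
    rcases h.range_le g hg (LinearMap.range f) with h' | h'
    · rcases (range_atom f hf).le_iff.1 h' with h'' | h''
      · exact absurd h'' (range_atom g hg).1
      · exact h''.symm
    · exact absurd h' (range_atom f hf).1
  exact ⟨(LinearEquiv.ofInjective f hf).trans
    ((LinearEquiv.ofEq _ _ hk).trans (LinearEquiv.ofInjective g hg).symm)⟩

theorem surj_of_ne_zero [IsSimpleModule A S] (f : M →ₗ[A] S) (h : f ≠ 0) :
    Function.Surjective f := LinearMap.surjective_of_ne_zero h

theorem fin_of_length {n : ℕ} (h : Module.length A M = n) :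
    IsNoetherian A M ∧ IsArtinian A M := by
  have : Module.length A M ≠ ⊤ := by rw [h]; exact ENat.natCast_ne_top n
  rw [Module.length_ne_top_iff] at this
  exact isFiniteLength_iff_isNoetherian_isArtinian.1 this

theorem exists_top [IsNoetherian A M] [Nontrivial M] :
    ∃ N : Submodule A M, IsSimpleModule A (M ⧸ N) := by
  obtain ⟨N, hN, -⟩ := (eq_top_or_exists_le_coatom (⊥ : Submodule A M)).resolve_left bot_ne_top
  exact ⟨N, isSimpleModule_iff_isCoatom.2 hN⟩

theorem exists_soc [IsArtinian A M] [Nontrivial M] :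
    ∃ N : Submodule A M, IsSimpleModule A N := by
  obtain ⟨N, hN, -⟩ := (eq_bot_or_exists_atom_le (⊤ : Submodule A M)).resolve_left top_ne_bot
  exact ⟨N, isSimpleModule_iff_isAtom.2 hN⟩

theorem nontrivial_of_length {n : ℕ} (h : Module.length A M = n) (hn : n ≠ 0) :
    Nontrivial M := by
  rw [← Module.length_pos_iff (R := A), h]
  exact_mod_cast Nat.pos_of_ne_zero hn

end Uniserial

end Nak

namespace Nak

section Exist

open CategoryTheory

variable {A : Type} [Ring A]

/-- Unbundled form of the Nakayama hypothesis. -/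
def NakH (A : Type) [Ring A] : Prop :=
  ∀ (M : Type) [AddCommGroup M] [Module A M], Module.Finite A M → Nontrivial M →
    (∀ N₁ N₂ : Submodule A M, IsCompl N₁ N₂ → N₁ = ⊥ ∨ N₂ = ⊥) → Uni A M

theorem map_bot_inj {M N : Type} [AddCommGroup M] [Module A M] [AddCommGroup N] [Module A N]
    {f : M →ₗ[A] N} (hf : Function.Injective f) {L : Submodule A M} (h : L.map f = ⊥) :
    L = ⊥ :=
  Submodule.map_injective_of_injective hf (by rw [h, Submodule.map_bot])

theorem exists_decomp [IsArtinianRing A] (hN : NakH A) (N : Submodule A A)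
    (hc : ∃ C, IsCompl N C) :
    ∃ F : Finset (Submodule A A), (∀ L ∈ F, (∃ C, IsCompl L C) ∧ L ≠ ⊥ ∧ Uni A L) ∧
      F.sup id = N := by
  classical
  induction N using WellFoundedLT.induction with
  | ind N ih =>
    obtain ⟨C, hC⟩ := hc
    by_cases hbot : N = ⊥
    · exact ⟨∅, by simp, by simp [hbot]⟩
    by_cases hind : ∀ N₁ N₂ : Submodule A N, IsCompl N₁ N₂ → N₁ = ⊥ ∨ N₂ = ⊥
    · refine ⟨{N}, ?_, by simp⟩
      intro L hL
      rw [Finset.mem_singleton] at hL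
      subst hL
      have : Nontrivial L := Submodule.nontrivial_iff_ne_bot.2 hbot
      exact ⟨⟨C, hC⟩, hbot, hN L inferInstance this hind⟩
    · push Not at hind
      obtain ⟨N₁, N₂, h12, h1, h2⟩ := hind
      have hinj : Function.Injective N.subtype := N.injective_subtype
      set L₁ := N₁.map N.subtype with hL₁
      set L₂ := N₂.map N.subtype with hL₂
      have hsup : L₁ ⊔ L₂ = N := by
        rw [hL₁, hL₂, ← Submodule.map_sup, h12.sup_eq_top, Submodule.map_top, Submodule.range_subtype]
      have hinf : L₁ ⊓ L₂ = ⊥ := by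
        rw [hL₁, hL₂, ← Submodule.map_inf _ hinj, h12.inf_eq_bot, Submodule.map_bot]
      have h1' : L₁ ≠ ⊥ := by
        intro h; exact h1 (map_bot_inj hinj h)
      have h2' : L₂ ≠ ⊥ := by
        intro h; exact h2 (map_bot_inj hinj h)
      have d12 : Disjoint L₁ L₂ := disjoint_iff.2 hinf
      have key : ∀ L L' : Submodule A A, Disjoint L L' → L ⊔ L' = N → L' ≠ ⊥ →
          L < N ∧ ∃ C, IsCompl L C := by
        intro L L' hd hs hne
        refine ⟨lt_of_le_of_ne (hs ▸ le_sup_left) ?_, L' ⊔ C, ?_, ?_⟩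
        · intro h
          have : L' ≤ L := h ▸ hs ▸ le_sup_right
          exact hne (hd.symm.eq_bot_of_le this)
        · apply Disjoint.disjoint_sup_right_of_disjoint_sup_left hd
          rw [hs]; exact hC.disjoint
        · rw [codisjoint_iff, ← sup_assoc, hs]; exact hC.sup_eq_top
      obtain ⟨a1, a2⟩ := key L₁ L₂ d12 hsup h2'
      obtain ⟨b1, b2⟩ := key L₂ L₁ d12.symm (by rw [sup_comm]; exact hsup) h1'
      obtain ⟨F₁, hF₁, e1⟩ := ih L₁ a1 a2
      obtain ⟨F₂, hF₂, e2⟩ := ih L₂ b1 b2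
      refine ⟨F₁ ∪ F₂, ?_, by rw [Finset.sup_union, e1, e2, hsup]⟩
      intro L hL
      rcases Finset.mem_union.1 hL with h | h
      · exact hF₁ L h
      · exact hF₂ L h

theorem exists_cover [IsArtinianRing A] (F : Finset (Submodule A A)) (hF : F.sup id = ⊤)
    (T : Type) [AddCommGroup T] [Module A T] [IsSimpleModule A T] :
    ∃ L ∈ F, ∃ f : L →ₗ[A] T, Function.Surjective f := by
  have := IsSimpleModule.nontrivial A T
  obtain ⟨t, ht⟩ := exists_ne (0 : T)
  by_contra hc
  push Not at hc
  have h0 : ∀ L ∈ F, L ≤ LinearMap.ker (LinearMap.toSpanSingleton A T t) := by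
    intro L hL x hx
    by_contra hne
    apply hc L hL ((LinearMap.toSpanSingleton A T t).domRestrict L)
    apply surj_of_ne_zero
    intro h
    apply hne
    have := LinearMap.congr_fun h ⟨x, hx⟩
    simpa using this
  have : (⊤ : Submodule A A) ≤ LinearMap.ker (LinearMap.toSpanSingleton A T t) := by
    rw [← hF]; exact Finset.sup_le h0
  have h1 : (1 : A) ∈ LinearMap.ker (LinearMap.toSpanSingleton A T t) := this trivial
  apply ht
  simpa using h1

theorem proj_of_isCompl (L C : Submodule A A) (h : IsCompl L C) : Module.Projective A L := by
  refine Module.Projective.of_split L.subtype (L.projectionOnto C h) ?_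
  ext x
  simp

variable {M E S : Type} [AddCommGroup M] [Module A M] [AddCommGroup E] [Module A E]
  [AddCommGroup S] [Module A S]

theorem uni_of_essential [IsArtinianRing A] (hN : NakH A) [IsSimpleModule A S]
    (i : S →ₗ[A] E) (hi : Function.Injective i)
    (hess : ∀ C : Submodule A E, C ≠ ⊥ → LinearMap.range i ≤ C) :
    Uni A E ∧ Module.length A E ≠ ⊤ := by
  have hat := range_atom i hi
  have fgU : ∀ N : Submodule A E, N.FG → N ≠ ⊥ → Uni A N := by
    intro N hfg hne
    have : Nontrivial N := Submodule.nontrivial_iff_ne_bot.2 hne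
    refine hN N (Module.Finite.iff_fg.2 hfg) this ?_
    intro N₁ N₂ h12
    by_contra hcon
    push Not at hcon
    obtain ⟨h1, h2⟩ := hcon
    have hinj : Function.Injective N.subtype := N.injective_subtype
    have h1' := hess (N₁.map N.subtype)
      (fun h => h1 (map_bot_inj hinj h))
    have h2' := hess (N₂.map N.subtype)
      (fun h => h2 (map_bot_inj hinj h))
    have := le_inf h1' h2'
    rw [← Submodule.map_inf _ hinj, h12.inf_eq_bot, Submodule.map_bot, le_bot_iff] at this
    exact hat.1 this
  have hU : Uni A E := by
    intro N₁ N₂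
    by_contra hcon
    push Not at hcon
    obtain ⟨h1, h2⟩ := hcon
    obtain ⟨x, hx1, hx2⟩ := SetLike.not_le_iff_exists.1 h1
    obtain ⟨y, hy2, hy1⟩ := SetLike.not_le_iff_exists.1 h2
    have hfg : (Submodule.span A {x} ⊔ Submodule.span A {y}).FG :=
      (Submodule.fg_span_singleton x).sup (Submodule.fg_span_singleton y)
    set N := Submodule.span A {x} ⊔ Submodule.span A {y} with hNdef
    have hxN : x ∈ N := Submodule.mem_sup_left (Submodule.mem_span_singleton_self x)
    have hyN : y ∈ N := Submodule.mem_sup_right (Submodule.mem_span_singleton_self y)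
    have hne : N ≠ ⊥ := by
      intro h
      rw [h, Submodule.mem_bot] at hxN
      exact hx2 (hxN ▸ N₂.zero_mem)
    rcases fgU N hfg hne (N₁.comap N.subtype) (N₂.comap N.subtype) with h | h
    · exact hx2 (h (show (⟨x, hxN⟩ : N) ∈ N₁.comap N.subtype from hx1))
    · exact hy1 (h (show (⟨y, hyN⟩ : N) ∈ N₂.comap N.subtype from hy2))
  refine ⟨hU, ?_⟩
  have hA : Module.length A A ≠ ⊤ := Module.length_ne_top
  have hle : ∀ x : E, Module.length A (Submodule.span A {x}) ≤ Module.length A A := by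
    intro x
    rw [← LinearMap.range_toSpanSingleton]
    exact Module.length_le_of_surjective _ (LinearMap.surjective_rangeRestrict _)
  let f : E → ℕ := fun x => (Module.length A (Submodule.span A {x})).toNat
  have hf : ∀ x, (f x : ℕ∞) = Module.length A (Submodule.span A {x}) := fun x =>
    ENat.natCast_toNat (ne_top_of_le_ne_top hA (hle x))
  have hbdd : BddAbove (Set.range f) := by
    refine ⟨(Module.length A A).toNat, ?_⟩
    rintro _ ⟨x, rfl⟩
    exact ENat.toNat_le_toNat (hle x) hA
  obtain ⟨x, hx⟩ := Nat.sSup_mem (Set.range_nonempty f) hbdd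
  have hmax : ∀ y, f y ≤ f x := fun y => by
    rw [hx]; exact le_csSup hbdd ⟨y, rfl⟩
  have htop : Submodule.span A {x} = ⊤ := by
    rw [eq_top_iff]
    intro y _
    rcases hU (Submodule.span A {y}) (Submodule.span A {x}) with h | h
    · exact h (Submodule.mem_span_singleton_self y)
    · rcases h.lt_or_eq with h | h
      · exfalso
        have h1 := Order.height_strictMono h (by
          rw [← Module.length_submodule]
          exact lt_top_iff_ne_top.2 (ne_top_of_le_ne_top hA (hle x)))
        rw [← Module.length_submodule, ← Module.length_submodule, ← hf, ← hf] at h1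
        have := hmax y
        have : f x < f y := by exact_mod_cast h1
        omega
      · rw [h]; exact Submodule.mem_span_singleton_self y
  have := hle x
  rw [htop, Module.length_top] at this
  exact ne_top_of_le_ne_top hA this

theorem finite_of_length_ne_top (h : Module.length A M ≠ ⊤) : IsNoetherian A M ∧ IsArtinian A M :=
  fin_of_length (n := (Module.length A M).toNat) (ENat.natCast_toNat h).symm

theorem injObj (M : ModuleCat.{0} A) : Injective M ↔ Module.Injective A M :=
  (Module.injective_iff_injective_object A M).symm

theorem projObj (M : ModuleCat.{0} A) : Projective M ↔ Module.Projective A M :=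
  (IsProjective.iff_projective (R := A) M).symm

theorem exists_hull [IsArtinianRing A] (hN : NakH A) (S : ModuleCat.{0} A)
    (hS : IsSimpleModule A S) :
    ∃ (I : ModuleCat.{0} A) (i : S →ₗ[A] I), Function.Injective i ∧ Module.Injective A I ∧
      Uni A I ∧ Module.length A I ≠ ⊤ := by
  let J := Injective.under S
  have hJ : Module.Injective A J := (injObj J).1 (inferInstanceAs (Injective (Injective.under S)))
  let j : S →ₗ[A] J := (Injective.ι S).hom
  have hj : Function.Injective j := (ModuleCat.mono_iff_injective _).1 inferInstance
  have := IsSimpleModule.nontrivial A S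
  obtain ⟨s, hs⟩ := exists_ne (0 : S)
  obtain ⟨C, hC, hCmax⟩ := zorn_le₀ {C : Submodule A J | j s ∉ C} (by
    intro c hc hchain
    rcases c.eq_empty_or_nonempty with rfl | hne
    · refine ⟨⊥, ?_, by simp⟩
      simp only [Set.mem_ofPred_eq, Submodule.mem_bot]
      intro h; exact hs (hj (by simpa using h))
    · refine ⟨sSup c, ?_, fun z hz => le_sSup hz⟩
      simp only [Set.mem_ofPred_eq]
      rw [Submodule.mem_sSup_of_directed hne hchain.directedOn]
      rintro ⟨y, hy, hys⟩
      exact hc hy hys)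
  simp only [Set.mem_ofPred_eq] at hC hCmax
  let i : S →ₗ[A] (J ⧸ C) := C.mkQ ∘ₗ j
  have hi : Function.Injective i := by
    rcases LinearMap.injective_or_eq_zero i with h | h
    · exact h
    · exfalso
      apply hC
      have := LinearMap.congr_fun h s
      simpa [i] using this
  have hess : ∀ D : Submodule A (J ⧸ C), D ≠ ⊥ → LinearMap.range i ≤ D := by
    intro D hD
    have h1 : j s ∈ D.comap C.mkQ := by
      by_contra hc
      have h2 := hCmax hc (Submodule.le_comap_mkQ C D)
      apply hD
      rw [eq_bot_iff]
      intro d hd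
      obtain ⟨d', rfl⟩ := C.mkQ_surjective d
      have : d' ∈ C := h2 hd
      simpa using this
    have h2 : s ∈ D.comap i := h1
    have h3 : D.comap i = ⊤ := by
      rcases eq_bot_or_eq_top (D.comap i) with h | h
      · rw [h, Submodule.mem_bot] at h2; exact absurd h2 hs
      · exact h
    rintro _ ⟨y, rfl⟩
    have : y ∈ D.comap i := h3 ▸ trivial
    exact this
  obtain ⟨hU, hL⟩ := uni_of_essential hN i hi hess
  refine ⟨ModuleCat.of A (J ⧸ C), i, hi, ?_, hU, hL⟩
  obtain ⟨hno, har⟩ := finite_of_length_ne_top hL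
  obtain ⟨φ, hφ⟩ := hJ.out i hi j
  have hφ' : φ ∘ₗ i = j := LinearMap.ext hφ
  let ψ : (J ⧸ C) →ₗ[A] (J ⧸ C) := C.mkQ ∘ₗ φ
  have hψ : Function.Injective ψ := by
    apply hU.inj_of_comp i hi
    have : ψ ∘ₗ i = i := by
      simp only [ψ, LinearMap.comp_assoc, hφ']; rfl
    rw [this]; exact hi
  have hψb := IsArtinian.bijective_of_injective_endomorphism ψ hψ
  let e := LinearEquiv.ofBijective ψ hψb
  constructor
  intro X Y _ _ _ _ f hf g
  obtain ⟨h, hh⟩ := hJ.out f hf (φ ∘ₗ g)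
  refine ⟨e.symm.toLinearMap ∘ₗ C.mkQ ∘ₗ h, fun x => ?_⟩
  simp only [LinearMap.comp_apply, LinearEquiv.coe_coe, hh]
  exact e.symm_apply_apply (g x)

end Exist

end Nak

namespace Nak

section DataSec

/-- A complete system of simple modules with their projective covers and injective hulls. -/
structure Data (A : Type) [Ring A] where
  K : Type
  fin : Finite K
  S : K → ModuleCat.{0} A
  P : K → ModuleCat.{0} A
  I : K → ModuleCat.{0} A
  simple : ∀ k, IsSimpleModule A (S k)
  projP : ∀ k, Module.Projective A (P k)
  uniP : ∀ k, Uni A (P k)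
  lenP : ∀ k, Module.length A (P k) ≠ ⊤
  f : ∀ k, P k →ₗ[A] S k
  surj : ∀ k, Function.Surjective (f k)
  injI : ∀ k, Module.Injective A (I k)
  uniI : ∀ k, Uni A (I k)
  lenI : ∀ k, Module.length A (I k) ≠ ⊤
  i : ∀ k, S k →ₗ[A] I k
  inj : ∀ k, Function.Injective (i k)
  uniq : ∀ k l, Nonempty (S k ≃ₗ[A] S l) → k = l
  ex : ∀ (T : Type) [AddCommGroup T] [Module A T], IsSimpleModule A T → ∃ k, Nonempty (T ≃ₗ[A] S k)

variable {A : Type} [Ring A]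

theorem exists_data [IsArtinianRing A] (hN : NakH A) : Nonempty (Data A) := by
  classical
  obtain ⟨F, hF, hFt⟩ := exists_decomp hN ⊤ ⟨⊥, isCompl_top_bot⟩
  have htop : ∀ L : F, ∃ N : Submodule A L.1, IsSimpleModule A (L.1 ⧸ N) := by
    intro L
    have : Nontrivial L.1 := Submodule.nontrivial_iff_ne_bot.2 (hF L.1 L.2).2.1
    exact exists_top
  choose N hNs using htop
  let st : Setoid F :=
    { r := fun L L' => Nonempty ((L.1 ⧸ N L) ≃ₗ[A] (L'.1 ⧸ N L'))
      iseqv := ⟨fun _ => ⟨LinearEquiv.refl _ _⟩, fun ⟨e⟩ => ⟨e.symm⟩,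
        fun ⟨e⟩ ⟨e'⟩ => ⟨e.trans e'⟩⟩ }
  let K := Quotient st
  have hull : ∀ k : K, ∃ (I : ModuleCat.{0} A)
      (i : (ModuleCat.of A (k.out.1 ⧸ N k.out)) →ₗ[A] I), Function.Injective i ∧
      Module.Injective A I ∧ Uni A I ∧ Module.length A I ≠ ⊤ := fun k =>
    exists_hull hN _ (hNs k.out)
  choose I i hi1 hi2 hi3 hi4 using hull
  refine ⟨{
    K := K
    fin := inferInstance
    S := fun k => ModuleCat.of A (k.out.1 ⧸ N k.out)
    P := fun k => ModuleCat.of A k.out.1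
    I := I
    simple := fun k => hNs k.out
    projP := fun k => ?_
    uniP := fun k => (hF _ k.out.2).2.2
    lenP := fun k => Module.length_ne_top
    f := fun k => (N k.out).mkQ
    surj := fun k => (N k.out).mkQ_surjective
    injI := hi2
    uniI := hi3
    lenI := hi4
    i := i
    inj := hi1
    uniq := fun k l h => ?_
    ex := fun T _ _ hT => ?_ }⟩
  · obtain ⟨C, hC⟩ := (hF _ k.out.2).1
    exact proj_of_isCompl _ C hC
  · exact Quotient.out_equiv_out.1 h
  · obtain ⟨L, hL, g, hg⟩ := exists_cover F hFt T
    let k : K := Quotient.mk st ⟨L, hL⟩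
    have h1 : st k.out ⟨L, hL⟩ := Quotient.mk_out (s := st) ⟨L, hL⟩
    obtain ⟨e⟩ := h1
    have := hNs ⟨L, hL⟩
    obtain ⟨e'⟩ := (hF L hL).2.2.top_unique g hg (N ⟨L, hL⟩).mkQ (N ⟨L, hL⟩).mkQ_surjective
    exact ⟨k, ⟨e'.trans e.symm⟩⟩

variable (D : Data A)

instance (k : D.K) : IsSimpleModule A (D.S k) := D.simple k

theorem Data.lift {M : Type} [AddCommGroup M] [Module A M] (hM : Uni A M) {k : D.K}
    (f : M →ₗ[A] D.S k) (hf : Function.Surjective f) :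
    ∃ h : D.P k →ₗ[A] M, Function.Surjective h ∧ f ∘ₗ h = D.f k := by
  have := D.projP k
  obtain ⟨h, hh⟩ := Module.projective_lifting_property f (D.f k) hf
  exact ⟨h, hM.surj_of_comp f hf h (by rw [hh]; exact D.surj k), hh⟩

theorem Data.ext {M : Type} [AddCommGroup M] [Module A M] (hM : Uni A M) {k : D.K}
    (f : D.S k →ₗ[A] M) (hf : Function.Injective f) :
    ∃ h : M →ₗ[A] D.I k, Function.Injective h ∧ h ∘ₗ f = D.i k := by
  obtain ⟨h, hh⟩ := (D.injI k).out f hf (D.i k)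
  have hh' : h ∘ₗ f = D.i k := LinearMap.ext hh
  exact ⟨h, hM.inj_of_comp f hf h (by rw [hh']; exact D.inj k), hh'⟩

/-- There is a uniserial module with top `S k` whose radical has top `S l`. -/
def Data.Arr (k l : D.K) : Prop :=
  ∃ (M : ModuleCat.{0} A) (f : M →ₗ[A] D.S k) (g : LinearMap.ker f →ₗ[A] D.S l),
    Uni A M ∧ Function.Surjective f ∧ Function.Surjective g

theorem Data.arr_right {k l l' : D.K} (h : D.Arr k l) (h' : D.Arr k l') : l = l' := by
  have key : ∀ l, D.Arr k l → ∃ g : LinearMap.ker (D.f k) →ₗ[A] D.S l, Function.Surjective g := by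
    rintro l ⟨M, f, g, hM, hf, hg⟩
    obtain ⟨h, hs, hh⟩ := D.lift hM f hf
    have hmap : ∀ x ∈ LinearMap.ker (D.f k), h x ∈ LinearMap.ker f := by
      intro x hx
      rw [← hh] at hx
      exact hx
    refine ⟨g ∘ₗ h.restrict hmap, ?_⟩
    intro y
    obtain ⟨⟨m, hm⟩, rfl⟩ := hg y
    obtain ⟨x, rfl⟩ := hs m
    refine ⟨⟨x, ?_⟩, rfl⟩
    rw [← hh]
    exact hm
  obtain ⟨g, hg⟩ := key l h
  obtain ⟨g', hg'⟩ := key l' h'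
  exact D.uniq _ _
    (((D.uniP k).of_injective (LinearMap.ker (D.f k)).subtype
      (Submodule.injective_subtype _)).top_unique g hg g' hg')

theorem Data.arr_left {k k' l : D.K} (h : D.Arr k l) (h' : D.Arr k' l) : k = k' := by
  have key : ∀ k, D.Arr k l → ∃ (X : Submodule A (D.I l)) (f : X →ₗ[A] D.S k),
      Function.Surjective f ∧ ¬ X ≤ LinearMap.range (D.i l) ∧
      ∀ x, f x = 0 → (x : D.I l) ∈ LinearMap.range (D.i l) := by
    rintro k ⟨M, f, g, hM, hf, hg⟩
    obtain ⟨ψ, hψ⟩ := (D.injI l).out (LinearMap.ker f).subtype (Submodule.injective_subtype _)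
      (D.i l ∘ₗ g)
    have hker : LinearMap.ker ψ ≤ LinearMap.ker f := by
      rcases hM (LinearMap.ker ψ) (LinearMap.ker f) with h | h
      · exact h
      · exfalso
        have := IsSimpleModule.nontrivial A (D.S l)
        obtain ⟨s, hs⟩ := exists_ne (0 : D.S l)
        obtain ⟨m, rfl⟩ := hg s
        apply hs
        apply D.inj l
        have h1 := hψ m
        have h2 : ψ (m : M) = 0 := h m.2
        simp only [Submodule.subtype_apply, h2, LinearMap.comp_apply] at h1
        rw [← h1, map_zero]
    have hmem : ∀ m, f m = 0 → ψ m ∈ LinearMap.range (D.i l) := by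
      intro m hm
      have := hψ ⟨m, hm⟩
      exact ⟨g ⟨m, hm⟩, this.symm⟩
    have hmem' : ∀ m, ψ m ∈ LinearMap.range (D.i l) → f m = 0 := by
      rintro m ⟨s, hs⟩
      obtain ⟨m', rfl⟩ := hg s
      have h1 := hψ m'
      have h2 : m - (m' : M) ∈ LinearMap.ker ψ := by
        rw [LinearMap.mem_ker, map_sub, sub_eq_zero, ← hs]
        exact h1.symm
      have h3 := hker h2
      have h4 : f (m' : M) = 0 := m'.2
      rw [LinearMap.mem_ker, map_sub, h4, sub_zero] at h3
      exact h3
    let e := ψ.quotKerEquivRange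
    let fb : LinearMap.range ψ →ₗ[A] D.S k := ((LinearMap.ker ψ).liftQ f hker) ∘ₗ e.symm.toLinearMap
    have hfb : ∀ m, fb ⟨ψ m, m, rfl⟩ = f m := by
      intro m
      have h1 : e.symm ⟨ψ m, m, rfl⟩ = (LinearMap.ker ψ).mkQ m := by
        rw [LinearEquiv.symm_apply_eq]; rfl
      change ((LinearMap.ker ψ).liftQ f hker) (e.symm ⟨ψ m, m, rfl⟩) = f m
      rw [h1]; rfl
    refine ⟨LinearMap.range ψ, fb, ?_, ?_, ?_⟩
    · intro y
      obtain ⟨m, rfl⟩ := hf y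
      exact ⟨_, hfb m⟩
    · intro hle
      have := IsSimpleModule.nontrivial A (D.S k)
      obtain ⟨s, hs⟩ := exists_ne (0 : D.S k)
      obtain ⟨m, rfl⟩ := hf s
      exact hs (hmem' m (hle ⟨m, rfl⟩))
    · rintro ⟨_, m, rfl⟩ hx
      rw [hfb] at hx
      exact hmem m hx
  have key2 : ∀ k k' (X X' : Submodule A (D.I l)) (f : X →ₗ[A] D.S k) (f' : X' →ₗ[A] D.S k'),
      Function.Surjective f → ¬ X ≤ LinearMap.range (D.i l) →
      (∀ x, f' x = 0 → (x : D.I l) ∈ LinearMap.range (D.i l)) → X ≤ X' → k = k' := by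
    intro k k' X X' f f' hf hX hf' hle
    apply D.uniq
    have hU : Uni A X := (D.uniI l).of_injective X.subtype (Submodule.injective_subtype _)
    refine hU.top_unique f hf (f' ∘ₗ Submodule.inclusion hle) (surj_of_ne_zero _ ?_)
    intro h0
    apply hX
    intro x hx
    exact hf' ⟨x, hle hx⟩ (LinearMap.congr_fun h0 ⟨x, hx⟩)
  obtain ⟨X, f, h1, h2, h3⟩ := key k h
  obtain ⟨X', f', h1', h2', h3'⟩ := key k' h'
  rcases D.uniI l X X' with hle | hle
  · exact key2 k k' X X' f f' h1 h2 h3' hle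
  · exact (key2 k' k X' X f' f h1' h2' h3 hle).symm

theorem Data.exists_perm : ∃ π : Equiv.Perm D.K, ∀ k l, D.Arr k l → l = π k := by
  classical
  have := D.fin
  have := Fintype.ofFinite D.K
  let s : Finset D.K := Finset.univ.filter (fun k => ∃ l, D.Arr k l)
  let g : D.K → D.K := fun k => if h : ∃ l, D.Arr k l then h.choose else k
  have hg : ∀ k l, D.Arr k l → l = g k := by
    intro k l h
    have hx : ∃ l, D.Arr k l := ⟨l, h⟩
    have : g k = hx.choose := dif_pos hx
    rw [this]
    exact D.arr_right h hx.choose_spec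
  obtain ⟨π, hπ⟩ := Finset.exists_equiv_extend_of_card_eq (t := (Finset.univ : Finset D.K))
    (by simp) (s := s) (f := g) (by simp) (by
      intro a ha b hb hab
      obtain ⟨l, hl⟩ := (Finset.mem_filter.1 ha).2
      obtain ⟨l', hl'⟩ := (Finset.mem_filter.1 hb).2
      have h1 := hg a l hl
      have h2 := hg b l' hl'
      have : l = l' := by rw [h1, h2, hab]
      subst this
      exact D.arr_left hl hl')
  refine ⟨π.trans (Equiv.subtypeUnivEquiv (by simp)), fun k l h => ?_⟩
  have := hπ k (by simp only [s, Finset.mem_filter, Finset.mem_univ, true_and]; exact ⟨l, h⟩)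
  rw [hg k l h, ← this]
  rfl

noncomputable def Data.π : Equiv.Perm D.K := D.exists_perm.choose

theorem Data.arr_π {k l : D.K} (h : D.Arr k l) : l = D.π k := D.exists_perm.choose_spec k l h

end DataSec

end Nak

namespace Nak

section USec

variable {A : Type} [Ring A]

variable (D : Data A) (σ : ℤ → D.K)

/-- `M` is uniserial of length `n` with top `S (σ x)`. -/
def U (M : Type) [AddCommGroup M] [Module A M] (x : ℤ) (n : ℕ) : Prop :=
  Uni A M ∧ Module.length A M = n ∧ (n ≠ 0 → ∃ f : M →ₗ[A] D.S (σ x), Function.Surjective f)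

/-- `M` is uniserial with composition factors `S (σ x), …, S (σ (y - 1))`. -/
def V (M : Type) [AddCommGroup M] [Module A M] (x y : ℤ) : Prop :=
  ∃ n : ℕ, y = x + n ∧ U D σ M x n

variable {D σ}
variable {M N Q T : Type} [AddCommGroup M] [Module A M] [AddCommGroup N] [Module A N]
  [AddCommGroup Q] [Module A Q] [AddCommGroup T] [Module A T]

theorem U.congr {x : ℤ} {n : ℕ} (h : U D σ M x n) (e : M ≃ₗ[A] N) : U D σ N x n := by
  refine ⟨h.1.of_surjective e.toLinearMap e.surjective, by rw [← e.length_eq, h.2.1], fun hn => ?_⟩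
  obtain ⟨f, hf⟩ := h.2.2 hn
  exact ⟨f ∘ₗ e.symm.toLinearMap, by simpa using hf⟩

theorem V.congr {x y : ℤ} (h : V D σ M x y) (e : M ≃ₗ[A] N) : V D σ N x y := by
  obtain ⟨n, h1, h2⟩ := h
  exact ⟨n, h1, h2.congr e⟩

theorem U.top_eq {x : ℤ} {n : ℕ} (h : U D σ M x n) {k : D.K} (f : M →ₗ[A] D.S k)
    (hf : Function.Surjective f) : k = σ x := by
  have hn : n ≠ 0 := by
    rintro rfl
    have h1 := h.2.1
    have := IsSimpleModule.nontrivial A (D.S k)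
    have h2 : Nontrivial M := hf.nontrivial
    rw [← Module.length_pos_iff (R := A), h1] at h2
    simp at h2
  obtain ⟨g, hg⟩ := h.2.2 hn
  exact D.uniq _ _ (h.1.top_unique f hf g hg)

theorem U.ker (hσ : ∀ x, σ (x + 1) = D.π (σ x)) {x : ℤ} {n : ℕ} (h : U D σ M x (n + 1))
    (f : M →ₗ[A] D.S (σ x)) (hf : Function.Surjective f) :
    U D σ (LinearMap.ker f) (x + 1) n := by
  have hu : Uni A (LinearMap.ker f) := h.1.of_injective _ (Submodule.injective_subtype _)
  have hl : Module.length A (LinearMap.ker f) = n := by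
    have h1 := Module.length_eq_add_of_exact (LinearMap.ker f).subtype f
      (Submodule.injective_subtype _) hf (LinearMap.exact_subtype_ker_map f)
    rw [h.2.1, Module.length_eq_one A (D.S (σ x))] at h1
    push_cast at h1
    exact ((ENat.addLECancellable_of_ne_top ENat.one_ne_top).inj_left.1 h1).symm
  refine ⟨hu, hl, fun hn => ?_⟩
  have := nontrivial_of_length hl hn
  have := (fin_of_length hl).1
  obtain ⟨L, hL⟩ := exists_top (A := A) (M := LinearMap.ker f)
  obtain ⟨l, ⟨e⟩⟩ := D.ex _ hL
  have harr : D.Arr (σ x) l := ⟨ModuleCat.of A M, f, e.toLinearMap ∘ₗ L.mkQ, h.1, hf,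
    e.surjective.comp L.mkQ_surjective⟩
  have := D.arr_π harr
  rw [← hσ] at this
  subst this
  exact ⟨e.toLinearMap ∘ₗ L.mkQ, e.surjective.comp L.mkQ_surjective⟩

theorem U.sub (hσ : ∀ x, σ (x + 1) = D.π (σ x)) (n : ℕ) : ∀ {M : Type} [AddCommGroup M]
    [Module A M] {x : ℤ} (_ : U D σ M x n) {l : ℕ} (j : N →ₗ[A] M) (_ : Function.Injective j)
    (_ : Module.length A N = l), U D σ N (x + n - l) l := by
  induction n with
  | zero =>
    intro M _ _ x h l j hj hl
    refine ⟨h.1.of_injective j hj, hl, fun hn => ?_⟩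
    have := Module.length_le_of_injective j hj
    rw [h.2.1, hl] at this
    exfalso
    have : l ≤ 0 := by exact_mod_cast this
    omega
  | succ n ih =>
    intro M _ _ x h l j hj hl
    obtain ⟨f, hf⟩ := h.2.2 (by omega)
    rcases h.1.le_ker f hf (LinearMap.range j) with h' | h'
    · have := ih (h.ker hσ f hf) (j.codRestrict (LinearMap.ker f) (fun c => h' ⟨c, rfl⟩))
        (fun a b hab => hj (congrArg Subtype.val hab)) hl
      have he : x + 1 + (n : ℤ) - l = x + ((n + 1 : ℕ) : ℤ) - l := by push_cast; ring
      rwa [he] at this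
    · let e := LinearEquiv.ofBijective j ⟨hj, LinearMap.range_eq_top.1 h'⟩
      have h2 := h.congr e.symm
      have : l = n + 1 := by
        have := h2.2.1
        rw [hl] at this
        exact_mod_cast this
      subst this
      have he : x + ((n + 1 : ℕ) : ℤ) - ((n + 1 : ℕ) : ℤ) = x := by ring
      rwa [he]

theorem V.exact (hσ : ∀ x, σ (x + 1) = D.π (σ x)) {x y : ℤ} (h : V D σ M x y)
    (j : N →ₗ[A] M) (g : M →ₗ[A] Q) (hj : Function.Injective j) (hg : Function.Surjective g)
    (hjg : Function.Exact j g) : ∃ z, V D σ N z y ∧ V D σ Q x z := by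
  obtain ⟨n, rfl, h⟩ := h
  have h1 := Module.length_eq_add_of_exact j g hj hg hjg
  rw [h.2.1] at h1
  have hN : Module.length A N ≠ ⊤ := fun h' => by simp [h'] at h1
  have hQ : Module.length A Q ≠ ⊤ := fun h' => by simp [h'] at h1
  obtain ⟨l, hl⟩ := ENat.ne_top_iff_exists.1 hN
  obtain ⟨m, hm⟩ := ENat.ne_top_iff_exists.1 hQ
  rw [← hl, ← hm] at h1
  have h1 : n = l + m := by exact_mod_cast h1
  refine ⟨x + n - l, ⟨l, by ring, h.sub hσ n j hj hl.symm⟩, ⟨m, by omega, ?_, hm.symm, ?_⟩⟩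
  · exact h.1.of_surjective g hg
  · intro hm0
    have := nontrivial_of_length hm.symm hm0
    have := (fin_of_length hm.symm).1
    obtain ⟨L, hL⟩ := exists_top (A := A) (M := Q)
    obtain ⟨k, ⟨e⟩⟩ := D.ex _ hL
    have hs : Function.Surjective (e.toLinearMap ∘ₗ L.mkQ) := e.surjective.comp L.mkQ_surjective
    have := h.top_eq ((e.toLinearMap ∘ₗ L.mkQ) ∘ₗ g) (hs.comp hg)
    subst this
    exact ⟨_, hs⟩

theorem V.uni {x y : ℤ} (h : V D σ M x y) : Uni A M := by
  obtain ⟨n, _, h⟩ := h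
  exact h.1

theorem V.le {x y : ℤ} (h : V D σ M x y) : x ≤ y := by
  obtain ⟨n, h1, h⟩ := h
  omega

theorem V.subsingleton {x : ℤ} (h : V D σ M x x) : Subsingleton M := by
  obtain ⟨n, h1, h⟩ := h
  obtain rfl : n = 0 := by omega
  rw [← Module.length_eq_zero_iff (R := A), h.2.1]
  rfl

theorem V.nontrivial {x y : ℤ} (h : V D σ M x y) (hxy : x < y) : Nontrivial M := by
  obtain ⟨n, h1, h⟩ := h
  exact nontrivial_of_length h.2.1 (by omega)

theorem V.len {x y x' y' : ℤ} (h : V D σ M x y) (h' : V D σ M x' y') : y - x = y' - x' := by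
  obtain ⟨n, h1, h⟩ := h
  obtain ⟨n', h1', h'⟩ := h'
  have := h.2.1.symm.trans h'.2.1
  have : n = n' := by exact_mod_cast this
  omega

theorem V.fin {x y : ℤ} (h : V D σ M x y) : IsNoetherian A M ∧ IsArtinian A M := by
  obtain ⟨n, h1, h⟩ := h
  exact fin_of_length h.2.1

theorem V.top {x y : ℤ} (h : V D σ M x y) (hxy : x < y) :
    ∃ f : M →ₗ[A] D.S (σ x), Function.Surjective f := by
  obtain ⟨n, h1, h⟩ := h
  exact h.2.2 (by omega)

theorem V.of_simple {x : ℤ} (e : T ≃ₗ[A] D.S (σ x)) : V D σ T x (x + 1) := by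
  have : IsSimpleModule A T := IsSimpleModule.congr e
  refine ⟨1, by simp, ?_, ?_, fun _ => ⟨e.toLinearMap, e.surjective⟩⟩
  · intro N₁ N₂
    rcases eq_bot_or_eq_top N₁ with h | h
    · left; rw [h]; exact bot_le
    · right; rw [h]; exact le_top
  · rw [Module.length_eq_one]; rfl

theorem simple_equiv [IsSimpleModule A T] [IsSimpleModule A Q] (f : T →ₗ[A] Q)
    (hf : Function.Surjective f) : Nonempty (T ≃ₗ[A] Q) := by
  have hne : f ≠ 0 := by
    rintro rfl
    have := IsSimpleModule.nontrivial A Q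
    obtain ⟨s, hs⟩ := exists_ne (0 : Q)
    obtain ⟨m, rfl⟩ := hf s
    exact hs rfl
  exact ⟨LinearEquiv.ofBijective f ⟨LinearMap.injective_of_ne_zero hne, hf⟩⟩

theorem V.simple [IsSimpleModule A T] {x y : ℤ} (h : V D σ T x y) :
    y = x + 1 ∧ Nonempty (T ≃ₗ[A] D.S (σ x)) := by
  obtain ⟨n, h1, h⟩ := h
  have hl := h.2.1
  rw [Module.length_eq_one] at hl
  have : n = 1 := by exact_mod_cast hl.symm
  subst this
  refine ⟨by simpa using h1, ?_⟩
  obtain ⟨f, hf⟩ := h.2.2 (by omega)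
  exact simple_equiv f hf

theorem V.top_eq [IsSimpleModule A T] {x y : ℤ} (h : V D σ M x y) (f : M →ₗ[A] T)
    (hf : Function.Surjective f) : Nonempty (T ≃ₗ[A] D.S (σ x)) := by
  have : x < y := by
    rcases h.le.lt_or_eq with h' | h'
    · exact h'
    · subst h'
      have := h.subsingleton
      have := IsSimpleModule.nontrivial A T
      exact absurd hf.subsingleton (not_subsingleton T)
  obtain ⟨g, hg⟩ := h.top this
  exact h.uni.top_unique f hf g hg

theorem V.soc (hσ : ∀ x, σ (x + 1) = D.π (σ x)) {x y : ℤ} (h : V D σ M x y) (hxy : x < y) :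
    ∃ f : D.S (σ (y - 1)) →ₗ[A] M, Function.Injective f := by
  have := h.nontrivial hxy
  have := h.fin.2
  obtain ⟨N, hN⟩ := exists_soc (A := A) (M := M)
  obtain ⟨z, h1, h2⟩ := h.exact hσ N.subtype N.mkQ (Submodule.injective_subtype _)
    N.mkQ_surjective (LinearMap.exact_subtype_mkQ N)
  obtain ⟨rfl, ⟨e⟩⟩ := h1.simple
  rw [add_sub_cancel_right]
  exact ⟨N.subtype ∘ₗ e.symm.toLinearMap, (Submodule.injective_subtype _).comp e.symm.injective⟩

theorem V.soc_eq [IsSimpleModule A T] (hσ : ∀ x, σ (x + 1) = D.π (σ x)) {x y : ℤ}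
    (h : V D σ M x y) (f : T →ₗ[A] M)
    (hf : Function.Injective f) : Nonempty (T ≃ₗ[A] D.S (σ (y - 1))) := by
  have : x < y := by
    rcases h.le.lt_or_eq with h' | h'
    · exact h'
    · subst h'
      have := h.subsingleton
      have := IsSimpleModule.nontrivial A T
      exact absurd hf.subsingleton (not_subsingleton T)
  obtain ⟨g, hg⟩ := h.soc hσ this
  exact h.uni.soc_unique f hf g hg

theorem V.of_soc (hσ : ∀ x, σ (x + 1) = D.π (σ x)) {y : ℤ} {n : ℕ} (hM : Uni A M)
    (hl : Module.length A M = n) (f : D.S (σ (y - 1)) →ₗ[A] M) (hf : Function.Injective f) :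
    V D σ M (y - n) y := by
  have hntS := IsSimpleModule.nontrivial A (D.S (σ (y - 1)))
  have hnt : Nontrivial M := hf.nontrivial
  have := (fin_of_length hl).1
  obtain ⟨L, hL⟩ := exists_top (A := A) (M := M)
  obtain ⟨k, ⟨e⟩⟩ := D.ex _ hL
  have hs : Function.Surjective (e.toLinearMap ∘ₗ L.mkQ) := e.surjective.comp L.mkQ_surjective
  let τ : ℤ → D.K := fun x => (D.π ^ x) k
  have hτ : ∀ x, τ (x + 1) = D.π (τ x) := by
    intro x
    simp only [τ]
    rw [add_comm, zpow_add, zpow_one]; rfl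
  have hV : V D τ M 0 n := ⟨n, by simp, hM, hl, fun _ => ⟨_, hs⟩⟩
  obtain ⟨e1⟩ := hV.soc_eq hτ f hf
  have h1 := D.uniq _ _ ⟨e1⟩
  have h2 : ∀ j : ℕ, σ (y - 1 - j) = τ (n - 1 - j) := by
    intro j
    induction j with
    | zero => simpa using h1
    | succ j ih =>
      apply D.π.injective
      rw [← hσ, ← hτ]
      have e1 : y - 1 - ((j + 1 : ℕ) : ℤ) + 1 = y - 1 - j := by push_cast; ring
      have e2 : (n : ℤ) - 1 - ((j + 1 : ℕ) : ℤ) + 1 = n - 1 - j := by push_cast; ring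
      rw [e1, e2, ih]
  have hn : n ≠ 0 := by
    rintro rfl
    rw [← Module.length_pos_iff (R := A), hl] at hnt
    simp at hnt
  have h3 := h2 (n - 1)
  have e1 : y - 1 - ((n - 1 : ℕ) : ℤ) = y - n := by omega
  have e2 : (n : ℤ) - 1 - ((n - 1 : ℕ) : ℤ) = 0 := by omega
  rw [e1, e2] at h3
  have h4 : σ (y - n) = k := by rw [h3]; simp [τ]
  refine ⟨n, by ring, hM, hl, fun _ => ?_⟩
  rw [h4]
  exact ⟨_, hs⟩

variable (D σ)

noncomputable def pp (x : ℤ) : ℤ := x + (Module.length A (D.P (σ x))).toNat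
noncomputable def qq (y : ℤ) : ℤ := y - (Module.length A (D.I (σ (y - 1)))).toNat

variable {D σ}

theorem V_P (x : ℤ) : V D σ (D.P (σ x)) x (pp D σ x) :=
  ⟨_, rfl, D.uniP _, (ENat.natCast_toNat (D.lenP _)).symm, fun _ => ⟨D.f _, D.surj _⟩⟩

theorem V_I (hσ : ∀ x, σ (x + 1) = D.π (σ x)) (y : ℤ) :
    V D σ (D.I (σ (y - 1))) (qq D σ y) y :=
  V.of_soc hσ (D.uniI _) (ENat.natCast_toNat (D.lenI _)).symm (D.i _) (D.inj _)

theorem V.lt_of_nontrivial {x y : ℤ} (h : V D σ M x y) [Nontrivial M] : x < y := by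
  rcases h.le.lt_or_eq with h' | h'
  · exact h'
  · subst h'
    have := h.subsingleton
    exact absurd this (not_subsingleton M)

theorem lt_pp (x : ℤ) : x < pp D σ x := by
  have := IsSimpleModule.nontrivial A (D.S (σ x))
  have := (D.surj (σ x)).nontrivial
  exact (V_P (D := D) (σ := σ) x).lt_of_nontrivial

theorem qq_lt (hσ : ∀ x, σ (x + 1) = D.π (σ x)) (y : ℤ) : qq D σ y < y := by
  have := IsSimpleModule.nontrivial A (D.S (σ (y - 1)))
  have := (D.inj (σ (y - 1))).nontrivial
  exact (V_I hσ y).lt_of_nontrivial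

theorem V.quot (hσ : ∀ x, σ (x + 1) = D.π (σ x)) {x y : ℤ} (h : V D σ M x y)
    (g : M →ₗ[A] Q) (hg : Function.Surjective g) :
    ∃ z, V D σ (LinearMap.ker g) z y ∧ V D σ Q x z :=
  h.exact hσ (LinearMap.ker g).subtype g (Submodule.injective_subtype _) hg
    (LinearMap.exact_subtype_ker_map g)

theorem V.subm (hσ : ∀ x, σ (x + 1) = D.π (σ x)) {x y : ℤ} (h : V D σ M x y)
    (j : N →ₗ[A] M) (hj : Function.Injective j) :
    ∃ z, V D σ N z y ∧ V D σ (M ⧸ LinearMap.range j) x z :=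
  h.exact hσ j (LinearMap.range j).mkQ hj (Submodule.mkQ_surjective _)
    (LinearMap.exact_map_mkQ_range j)

theorem V.y_le (hσ : ∀ x, σ (x + 1) = D.π (σ x)) {x y : ℤ} (h : V D σ M x y) (hxy : x < y) :
    y ≤ pp D σ x := by
  obtain ⟨f, hf⟩ := h.top hxy
  obtain ⟨g, hg, -⟩ := D.lift h.uni f hf
  obtain ⟨z, h1, h2⟩ := (V_P x).quot hσ g hg
  have := h.len h2
  have := h1.le
  omega

theorem V.le_x (hσ : ∀ x, σ (x + 1) = D.π (σ x)) {x y : ℤ} (h : V D σ M x y) (hxy : x < y) :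
    qq D σ y ≤ x := by
  obtain ⟨f, hf⟩ := h.soc hσ hxy
  obtain ⟨g, hg, -⟩ := D.ext h.uni f hf
  obtain ⟨z, h1, h2⟩ := (V_I hσ y).subm hσ g hg
  have := h.len h1
  have := h2.le
  omega

theorem V.exists_quot (hσ : ∀ x, σ (x + 1) = D.π (σ x)) {x : ℤ} (j : ℕ) :
    ∀ {y : ℤ} (M : ModuleCat.{0} A) (_ : V D σ M x y) (_ : j ≤ y - x),
    ∃ Q : ModuleCat.{0} A, V D σ Q x (y - j) := by
  induction j with
  | zero => intro y M h _; exact ⟨M, by simpa using h⟩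
  | succ j ih =>
    intro y M h hj
    push_cast at hj
    obtain ⟨f, hf⟩ := h.soc hσ (by omega)
    obtain ⟨z, h1, h2⟩ := h.subm hσ f hf
    have := h1.simple.1
    obtain rfl : z = y - 1 := by omega
    obtain ⟨Q, hQ⟩ := ih (ModuleCat.of A (M ⧸ LinearMap.range f)) h2 (by omega)
    refine ⟨Q, ?_⟩
    have e : y - ((j + 1 : ℕ) : ℤ) = y - 1 - j := by push_cast; ring
    rwa [e]

theorem V.exists_sub (hσ : ∀ x, σ (x + 1) = D.π (σ x)) {y : ℤ} (j : ℕ) :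
    ∀ {x : ℤ} (M : ModuleCat.{0} A) (_ : V D σ M x y) (_ : j ≤ y - x),
    ∃ Q : ModuleCat.{0} A, V D σ Q (x + j) y := by
  induction j with
  | zero => intro x M h _; exact ⟨M, by simpa using h⟩
  | succ j ih =>
    intro x M h hj
    push_cast at hj
    obtain ⟨f, hf⟩ := h.top (by omega)
    obtain ⟨z, h1, h2⟩ := h.quot hσ f hf
    have := h2.simple.1
    subst this
    obtain ⟨Q, hQ⟩ := ih (ModuleCat.of A (LinearMap.ker f)) h1 (by omega)
    refine ⟨Q, ?_⟩
    have e : x + ((j + 1 : ℕ) : ℤ) = x + 1 + j := by push_cast; ring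
    rwa [e]

theorem gc (hσ : ∀ x, σ (x + 1) = D.π (σ x)) : GaloisConnection (qq D σ) (pp D σ) := by
  intro y x
  rcases le_or_gt y x with hxy | hxy
  · exact iff_of_true ((qq_lt hσ y).le.trans hxy) (hxy.trans (lt_pp x).le)
  · constructor
    · intro h
      obtain ⟨Q, hQ⟩ := V.exists_sub hσ (x - qq D σ y).toNat _ (V_I hσ y) (by omega)
      have e : qq D σ y + ((x - qq D σ y).toNat : ℤ) = x := by omega
      rw [e] at hQ
      exact hQ.y_le hσ hxy
    · intro h
      obtain ⟨Q, hQ⟩ := V.exists_quot hσ (pp D σ x - y).toNat _ (V_P x) (by omega)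
      have e : pp D σ x - ((pp D σ x - y).toNat : ℤ) = y := by omega
      rw [e] at hQ
      exact hQ.le_x hσ hxy

theorem V.proj_iff (hσ : ∀ x, σ (x + 1) = D.π (σ x)) {x y : ℤ} (h : V D σ M x y) (hxy : x < y) :
    Module.Projective A M ↔ y = pp D σ x := by
  obtain ⟨f, hf⟩ := h.top hxy
  obtain ⟨g, hg, hfg⟩ := D.lift h.uni f hf
  constructor
  · intro hp
    obtain ⟨s, hs⟩ := Module.projective_lifting_property g LinearMap.id hg
    have h1 : D.f (σ x) ∘ₗ s = f := by
      rw [← hfg, LinearMap.comp_assoc, hs, LinearMap.comp_id]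
    have h2 : Function.Surjective s :=
      (D.uniP _).surj_of_comp (D.f (σ x)) (D.surj _) s (by rw [h1]; exact hf)
    have h3 : Function.Injective s := Function.LeftInverse.injective (g := g)
      (fun m => LinearMap.congr_fun hs m)
    have := (h.congr (LinearEquiv.ofBijective s ⟨h3, h2⟩)).len (V_P x)
    omega
  · intro hy
    obtain ⟨z, h1, h2⟩ := (V_P x).quot hσ g hg
    have := h.len h2
    obtain rfl : z = pp D σ x := by omega
    have := h1.subsingleton
    have hi : Function.Injective g := by
      rw [← LinearMap.ker_eq_bot, ← Submodule.subsingleton_iff_eq_bot]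
      exact this
    have := D.projP (σ x)
    exact Module.Projective.of_equiv (LinearEquiv.ofBijective g ⟨hi, hg⟩)

theorem injective_of_equiv (e : M ≃ₗ[A] N) (h : Module.Injective A M) : Module.Injective A N := by
  refine ⟨fun X Y _ _ _ _ f hf g => ?_⟩
  obtain ⟨k, hk⟩ := h.out f hf (e.symm.toLinearMap ∘ₗ g)
  refine ⟨e.toLinearMap ∘ₗ k, fun x => ?_⟩
  simp [hk]

theorem V.inj_iff (hσ : ∀ x, σ (x + 1) = D.π (σ x)) {x y : ℤ} (h : V D σ M x y) (hxy : x < y) :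
    Module.Injective A M ↔ x = qq D σ y := by
  obtain ⟨f, hf⟩ := h.soc hσ hxy
  obtain ⟨g, hg, hfg⟩ := D.ext h.uni f hf
  constructor
  · intro hp
    obtain ⟨s, hs⟩ := hp.out g hg LinearMap.id
    have h1 : s ∘ₗ D.i (σ (y - 1)) = f := by
      rw [← hfg, ← LinearMap.comp_assoc]
      ext m
      exact hs (f m)
    have h2 : Function.Injective s :=
      (D.uniI _).inj_of_comp (D.i (σ (y - 1))) (D.inj _) s (by rw [h1]; exact hf)
    have h3 : Function.Surjective s := fun m => ⟨g m, hs m⟩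
    have := (h.congr (LinearEquiv.ofBijective s ⟨h2, h3⟩).symm).len (V_I hσ y)
    omega
  · intro hy
    obtain ⟨z, h1, h2⟩ := (V_I hσ y).subm hσ g hg
    have := h.len h1
    obtain rfl : z = qq D σ y := by omega
    have := h2.subsingleton
    have hs : Function.Surjective g := by
      rw [← LinearMap.range_eq_top, ← Submodule.Quotient.subsingleton_iff]
      exact this
    exact injective_of_equiv (LinearEquiv.ofBijective g ⟨hg, hs⟩).symm (D.injI _)

end USec

end Nak

namespace Nak

section Cat

open ArtinAlg

variable {A : Type} [Ring A]

theorem projDimLE_iff (n : ℕ) : ∀ M : ModuleCat.{0} A,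
    ProjDimLE A n M ↔ HasProjectiveDimensionLT M (n + 1) := by
  induction n with
  | zero =>
    intro M
    rw [← projective_iff_hasProjectiveDimensionLT_one]
    exact ⟨fun h => by cases h; assumption, fun h => ProjDimLE.zero M h⟩
  | succ n ih =>
    intro M
    constructor
    · intro h
      cases h with
      | succ _ _ P f hP hf h =>
        have hS : (ShortComplex.mk (kernel.ι f) f (kernel.condition f)).ShortExact :=
          { exact := ShortComplex.exact_kernel f }
        exact (hS.hasProjectiveDimensionLT_X₃_iff n hP).2 ((ih _).1 h)
    · intro h
      let f := Projective.π M
      have hS : (ShortComplex.mk (kernel.ι f) f (kernel.condition f)).ShortExact :=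
        { exact := ShortComplex.exact_kernel f }
      have hP : Projective (Projective.over M) := inferInstance
      exact ProjDimLE.succ n M _ f hP inferInstance
        ((ih _).2 ((hS.hasProjectiveDimensionLT_X₃_iff n hP).1 h))

theorem injDimLE_iff (n : ℕ) : ∀ M : ModuleCat.{0} A,
    InjDimLE A n M ↔ HasInjectiveDimensionLT M (n + 1) := by
  induction n with
  | zero =>
    intro M
    rw [← injective_iff_hasInjectiveDimensionLT_one]
    exact ⟨fun h => by cases h; assumption, fun h => InjDimLE.zero M h⟩
  | succ n ih =>
    intro M
    constructor
    · intro h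
      cases h with
      | succ _ _ P f hP hf h =>
        have hS : (ShortComplex.mk f (cokernel.π f) (cokernel.condition f)).ShortExact :=
          { exact := ShortComplex.exact_cokernel f }
        exact (hS.hasInjectiveDimensionLT_X₃_iff n hP).1 ((ih _).1 h)
    · intro h
      let f := Injective.ι M
      have hS : (ShortComplex.mk f (cokernel.π f) (cokernel.condition f)).ShortExact :=
        { exact := ShortComplex.exact_cokernel f }
      have hP : Injective (Injective.under M) := inferInstance
      exact InjDimLE.succ n M _ f hP inferInstance
        ((ih _).2 ((hS.hasInjectiveDimensionLT_X₃_iff n hP).2 h))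

theorem projDimLE_succ_iff {n : ℕ} {M X : ModuleCat.{0} A} (h : IsSyzygyOf A M X) :
    ProjDimLE A (n + 1) M ↔ ProjDimLE A n X := by
  obtain ⟨P, f, ⟨hP, hf, -⟩, ⟨e⟩⟩ := h
  have hS : (ShortComplex.mk (kernel.ι f) f (kernel.condition f)).ShortExact :=
    { exact := ShortComplex.exact_kernel f }
  rw [projDimLE_iff, projDimLE_iff]
  refine (hS.hasProjectiveDimensionLT_X₃_iff n hP).trans ?_
  exact ⟨fun h => hasProjectiveDimensionLT_of_iso e.symm _,
    fun h => hasProjectiveDimensionLT_of_iso e _⟩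

theorem injDimLE_succ_iff {n : ℕ} {M X : ModuleCat.{0} A} (h : IsCosyzygyOf A M X) :
    InjDimLE A (n + 1) M ↔ InjDimLE A n X := by
  obtain ⟨P, f, ⟨hP, hf, -⟩, ⟨e⟩⟩ := h
  have hS : (ShortComplex.mk f (cokernel.π f) (cokernel.condition f)).ShortExact :=
    { exact := ShortComplex.exact_cokernel f }
  rw [injDimLE_iff, injDimLE_iff]
  refine (hS.hasInjectiveDimensionLT_X₃_iff n hP).symm.trans ?_
  exact ⟨fun h => hasInjectiveDimensionLT_of_iso e.symm _,
    fun h => hasInjectiveDimensionLT_of_iso e _⟩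

theorem projDimLE_zero_iff {M : ModuleCat.{0} A} : ProjDimLE A 0 M ↔ Module.Projective A M := by
  rw [projDimLE_iff, ← projective_iff_hasProjectiveDimensionLT_one, projObj]

theorem injDimLE_zero_iff {M : ModuleCat.{0} A} : InjDimLE A 0 M ↔ Module.Injective A M := by
  rw [injDimLE_iff, ← injective_iff_hasInjectiveDimensionLT_one, injObj]

variable {D : Data A} {σ : ℤ → D.K}

theorem V.iso {M N : ModuleCat.{0} A} {x y : ℤ} (h : V D σ M x y) (e : M ≅ N) : V D σ N x y :=
  h.congr e.toLinearEquiv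

theorem V.cover {M P : ModuleCat.{0} A} {x y : ℤ} (h : V D σ M x y) (hxy : x < y)
    {f : P ⟶ M} (hf : IsProjectiveCoverHom A f) : V D σ P x (pp D σ x) := by
  obtain ⟨hP, hfe, hess⟩ := hf
  rw [projObj] at hP
  have hfs : Function.Surjective f.hom := (ModuleCat.epi_iff_surjective f).1 hfe
  obtain ⟨f0, hf0⟩ := h.top hxy
  obtain ⟨g, hg, hfg⟩ := D.lift h.uni f0 hf0
  obtain ⟨k, hk⟩ := Module.projective_lifting_property g f.hom hg
  have hks : Function.Surjective k := by
    refine (D.uniP _).surj_of_comp (D.f _) (D.surj _) k ?_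
    rw [← hfg, LinearMap.comp_assoc, hk]
    exact hf0.comp hfs
  have := D.projP (σ x)
  obtain ⟨s, hs⟩ := Module.projective_lifting_property k LinearMap.id hks
  have hss : Function.Surjective s := by
    refine (ModuleCat.epi_iff_surjective (ModuleCat.ofHom s)).1 (hess _ (ModuleCat.ofHom s) ?_)
    rw [ModuleCat.epi_iff_surjective]
    have : f.hom ∘ₗ s = g := by rw [← hk, LinearMap.comp_assoc, hs, LinearMap.comp_id]
    change Function.Surjective (f.hom ∘ₗ s)
    rw [this]
    exact hg
  have hsi : Function.Injective s := Function.LeftInverse.injective (g := k)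
      (fun m => LinearMap.congr_fun hs m)
  exact (V_P x).congr (LinearEquiv.ofBijective s ⟨hsi, hss⟩)

theorem V.exists_cover {M : ModuleCat.{0} A} {x y : ℤ} (h : V D σ M x y) (hxy : x < y) :
    ∃ (P : ModuleCat.{0} A) (f : P ⟶ M), IsProjectiveCoverHom A f := by
  obtain ⟨f0, hf0⟩ := h.top hxy
  obtain ⟨g, hg, hfg⟩ := D.lift h.uni f0 hf0
  refine ⟨D.P (σ x), ModuleCat.ofHom g, (projObj _).2 (D.projP _),
    (ModuleCat.epi_iff_surjective _).2 hg, fun N k hk => ?_⟩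
  rw [ModuleCat.epi_iff_surjective] at hk ⊢
  refine (D.uniP _).surj_of_comp (D.f _) (D.surj _) k.hom ?_
  rw [← hfg, LinearMap.comp_assoc]
  exact hf0.comp hk

theorem V.envelope (hσ : ∀ x, σ (x + 1) = D.π (σ x)) {M I : ModuleCat.{0} A} {x y : ℤ}
    (h : V D σ M x y) (hxy : x < y)
    {f : M ⟶ I} (hf : IsInjectiveEnvelopeHom A f) : V D σ I (qq D σ y) y := by
  obtain ⟨hI, hfe, hess⟩ := hf
  rw [injObj] at hI
  have hfs : Function.Injective f.hom := (ModuleCat.mono_iff_injective f).1 hfe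
  obtain ⟨f0, hf0⟩ := h.soc hσ hxy
  obtain ⟨g, hg, hfg⟩ := D.ext h.uni f0 hf0
  obtain ⟨k, hk⟩ := hI.out g hg f.hom
  have hk' : k ∘ₗ g = f.hom := LinearMap.ext hk
  have hks : Function.Injective k := by
    refine (D.uniI _).inj_of_comp (D.i _) (D.inj _) k ?_
    rw [← hfg, ← LinearMap.comp_assoc, hk']
    exact hfs.comp hf0
  obtain ⟨s, hs⟩ := (D.injI (σ (y - 1))).out k hks LinearMap.id
  have hs' : s ∘ₗ k = LinearMap.id := LinearMap.ext hs
  have hss : Function.Injective s := by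
    refine (ModuleCat.mono_iff_injective (ModuleCat.ofHom s)).1 (hess _ (ModuleCat.ofHom s) ?_)
    rw [ModuleCat.mono_iff_injective]
    have : s ∘ₗ f.hom = g := by rw [← hk', ← LinearMap.comp_assoc, hs', LinearMap.id_comp]
    change Function.Injective (s ∘ₗ f.hom)
    rw [this]
    exact hg
  have hsi : Function.Surjective s := fun m => ⟨k m, hs m⟩
  exact (V_I hσ y).congr (LinearEquiv.ofBijective s ⟨hss, hsi⟩).symm

theorem V.exists_envelope (hσ : ∀ x, σ (x + 1) = D.π (σ x)) {M : ModuleCat.{0} A} {x y : ℤ}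
    (h : V D σ M x y) (hxy : x < y) :
    ∃ (I : ModuleCat.{0} A) (f : M ⟶ I), IsInjectiveEnvelopeHom A f := by
  obtain ⟨f0, hf0⟩ := h.soc hσ hxy
  obtain ⟨g, hg, hfg⟩ := D.ext h.uni f0 hf0
  refine ⟨D.I (σ (y - 1)), ModuleCat.ofHom g, (injObj _).2 (D.injI _),
    (ModuleCat.mono_iff_injective _).2 hg, fun N k hk => ?_⟩
  rw [ModuleCat.mono_iff_injective] at hk ⊢
  refine (D.uniI _).inj_of_comp (D.i _) (D.inj _) k.hom ?_
  rw [← hfg, ← LinearMap.comp_assoc]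
  have hk2 : Function.Injective (k.hom ∘ₗ g) := hk
  exact hk2.comp hf0

theorem V.syzygy (hσ : ∀ x, σ (x + 1) = D.π (σ x)) {M X : ModuleCat.{0} A} {x y : ℤ}
    (h : V D σ M x y) (hxy : x < y) (hX : IsSyzygyOf A M X) : V D σ X y (pp D σ x) := by
  obtain ⟨P, f, hf, ⟨e⟩⟩ := hX
  have hP := h.cover hxy hf
  obtain ⟨z, h1, h2⟩ := hP.quot hσ f.hom ((ModuleCat.epi_iff_surjective f).1 hf.2.1)
  have := h.len h2
  obtain rfl : z = y := by omega
  have h3 : V D σ (ModuleCat.of A (LinearMap.ker f.hom)) z (pp D σ x) := h1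
  exact h3.iso ((ModuleCat.kernelIsoKer f).symm ≪≫ e.symm)

theorem V.cosyzygy (hσ : ∀ x, σ (x + 1) = D.π (σ x)) {M X : ModuleCat.{0} A} {x y : ℤ}
    (h : V D σ M x y) (hxy : x < y) (hX : IsCosyzygyOf A M X) : V D σ X (qq D σ y) x := by
  obtain ⟨I, f, hf, ⟨e⟩⟩ := hX
  have hI := h.envelope hσ hxy hf
  obtain ⟨z, h1, h2⟩ := hI.subm hσ f.hom ((ModuleCat.mono_iff_injective f).1 hf.2.1)
  have := h.len h1
  obtain rfl : z = x := by omega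
  have h3 : V D σ (ModuleCat.of A (I ⧸ LinearMap.range f.hom)) (qq D σ y) z := h2
  exact h3.iso ((ModuleCat.cokernelIsoRangeQuotient f).symm ≪≫ e.symm)

theorem V.exists_syzygy {M : ModuleCat.{0} A} {x y : ℤ} (h : V D σ M x y) (hxy : x < y) :
    ∃ X, IsSyzygyOf A M X := by
  obtain ⟨P, f, hf⟩ := h.exists_cover hxy
  exact ⟨_, P, f, hf, ⟨Iso.refl _⟩⟩

theorem V.exists_cosyzygy (hσ : ∀ x, σ (x + 1) = D.π (σ x)) {M : ModuleCat.{0} A} {x y : ℤ}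
    (h : V D σ M x y) (hxy : x < y) : ∃ X, IsCosyzygyOf A M X := by
  obtain ⟨P, f, hf⟩ := h.exists_envelope hσ hxy
  exact ⟨_, P, f, hf, ⟨Iso.refl _⟩⟩

theorem V.simpleTop {M T : ModuleCat.{0} A} {x y : ℤ} (h : V D σ M x y) (hxy : x < y) :
    IsSimpleTopOf A M T ↔ Nonempty (T ≃ₗ[A] D.S (σ x)) := by
  constructor
  · rintro ⟨hT, f, hf, -⟩
    exact h.top_eq f.hom ((ModuleCat.epi_iff_surjective f).1 hf)
  · rintro ⟨e⟩
    have hT : IsSimpleModule A T := IsSimpleModule.congr e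
    obtain ⟨f, hf⟩ := h.top hxy
    have hs : Function.Surjective (e.symm.toLinearMap ∘ₗ f) := e.symm.surjective.comp hf
    refine ⟨hT, ModuleCat.ofHom (e.symm.toLinearMap ∘ₗ f),
      (ModuleCat.epi_iff_surjective _).2 hs, fun N g hg => ?_⟩
    rw [ModuleCat.epi_iff_surjective] at hg ⊢
    exact h.uni.surj_of_comp _ hs g.hom hg

theorem V.simpleSoc (hσ : ∀ x, σ (x + 1) = D.π (σ x)) {M T : ModuleCat.{0} A} {x y : ℤ}
    (h : V D σ M x y) (hxy : x < y) :
    IsSimpleSocOf A M T ↔ Nonempty (T ≃ₗ[A] D.S (σ (y - 1))) := by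
  constructor
  · rintro ⟨hT, f, hf, -⟩
    exact h.soc_eq hσ f.hom ((ModuleCat.mono_iff_injective f).1 hf)
  · rintro ⟨e⟩
    have hT : IsSimpleModule A T := IsSimpleModule.congr e
    obtain ⟨f, hf⟩ := h.soc hσ hxy
    have hs : Function.Injective (f ∘ₗ e.toLinearMap) := hf.comp e.injective
    refine ⟨hT, ModuleCat.ofHom (f ∘ₗ e.toLinearMap),
      (ModuleCat.mono_iff_injective _).2 hs, fun N g hg => ?_⟩
    rw [ModuleCat.mono_iff_injective] at hg ⊢
    exact h.uni.inj_of_comp _ hs g.hom hg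

/-- Behaviour of a syzygy chain. -/
theorem V.chain (hσ : ∀ x, σ (x + 1) = D.π (σ x)) (e : ℕ) : ∀ (w : ℕ → ℤ)
    (_ : ∀ m, w (m + 2) = pp D σ (w m)) (_ : ∀ m ≤ e, w m < w (m + 1))
    (M : ModuleCat.{0} A) (_ : V D σ M (w 0) (w 1)),
    (∃ X, IsNthSyzygy A e M X) ∧
    (∀ X, IsNthSyzygy A e M X → V D σ X (w e) (w (e + 1))) ∧
    (∀ m < e, ¬ ProjDimLE A m M) ∧ (ProjDimLE A e M ↔ w (e + 1) = w (e + 2)) := by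
  induction e with
  | zero =>
    intro w hw hlt M hM
    refine ⟨⟨M, ⟨Iso.refl _⟩⟩, fun X ⟨i⟩ => hM.iso i.symm, by simp, ?_⟩
    rw [projDimLE_zero_iff, hM.proj_iff hσ (hlt 0 le_rfl), hw]
  | succ e ih =>
    intro w hw hlt M hM
    have h01 := hlt 0 (Nat.zero_le _)
    have key : ∀ Y, IsSyzygyOf A M Y → _ := fun Y hY =>
      ih (fun m => w (m + 1)) (fun m => hw (m + 1)) (fun m hm => hlt (m + 1) (by omega)) Y
        (by have := hM.syzygy hσ h01 hY; rw [← hw] at this; exact this)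
    obtain ⟨Y, hY⟩ := hM.exists_syzygy h01
    obtain ⟨⟨X, hX⟩, h2, h3, h4⟩ := key Y hY
    refine ⟨⟨X, Y, hY, hX⟩, ?_, ?_, ?_⟩
    · rintro X ⟨Y, hY, hX⟩
      exact (key Y hY).2.1 X hX
    · intro m hm
      cases m with
      | zero =>
        rw [projDimLE_zero_iff, hM.proj_iff hσ h01, ← hw]
        exact (hlt 1 (by omega)).ne
      | succ m =>
        rw [projDimLE_succ_iff hY]
        exact h3 m (by omega)
    · rw [projDimLE_succ_iff hY]
      exact h4

/-- Behaviour of a cosyzygy chain. -/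
theorem V.cochain (hσ : ∀ x, σ (x + 1) = D.π (σ x)) (e : ℕ) : ∀ (w : ℕ → ℤ)
    (_ : ∀ m, w (m + 2) = qq D σ (w m)) (_ : ∀ m ≤ e, w (m + 1) < w m)
    (M : ModuleCat.{0} A) (_ : V D σ M (w 1) (w 0)),
    (∃ X, IsNthCosyzygy A e M X) ∧
    (∀ X, IsNthCosyzygy A e M X → V D σ X (w (e + 1)) (w e)) ∧
    (∀ m < e, ¬ InjDimLE A m M) ∧ (InjDimLE A e M ↔ w (e + 1) = w (e + 2)) := by
  induction e with
  | zero =>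
    intro w hw hlt M hM
    refine ⟨⟨M, ⟨Iso.refl _⟩⟩, fun X ⟨i⟩ => hM.iso i.symm, by simp, ?_⟩
    rw [injDimLE_zero_iff, hM.inj_iff hσ (hlt 0 le_rfl), hw]
  | succ e ih =>
    intro w hw hlt M hM
    have h01 := hlt 0 (Nat.zero_le _)
    have key : ∀ Y, IsCosyzygyOf A M Y → _ := fun Y hY =>
      ih (fun m => w (m + 1)) (fun m => hw (m + 1)) (fun m hm => hlt (m + 1) (by omega)) Y
        (by have := hM.cosyzygy hσ h01 hY; rw [← hw] at this; exact this)
    obtain ⟨Y, hY⟩ := hM.exists_cosyzygy hσ h01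
    obtain ⟨⟨X, hX⟩, h2, h3, h4⟩ := key Y hY
    refine ⟨⟨X, Y, hY, hX⟩, ?_, ?_, ?_⟩
    · rintro X ⟨Y, hY, hX⟩
      exact (key Y hY).2.1 X hX
    · intro m hm
      cases m with
      | zero =>
        rw [injDimLE_zero_iff, hM.inj_iff hσ h01, ← hw]
        exact (hlt 1 (by omega)).ne'
      | succ m =>
        rw [injDimLE_succ_iff hY]
        exact h3 m (by omega)
    · rw [injDimLE_succ_iff hY]
      exact h4

theorem le_projDim {M : ModuleCat.{0} A} {e : ℕ} (h : ∀ m < e, ¬ ProjDimLE A m M) :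
    (e : ℕ∞) ≤ projDim A M := by
  refine le_sInf ?_
  rintro d ⟨n, rfl, hn⟩
  by_contra hc
  exact h n (by exact_mod_cast not_le.1 hc) hn

theorem projDim_le {M : ModuleCat.{0} A} {e : ℕ} (h : ProjDimLE A e M) :
    projDim A M ≤ e := sInf_le ⟨e, rfl, h⟩

theorem le_injDim {M : ModuleCat.{0} A} {e : ℕ} (h : ∀ m < e, ¬ InjDimLE A m M) :
    (e : ℕ∞) ≤ injDim A M := by
  refine le_sInf ?_
  rintro d ⟨n, rfl, hn⟩
  by_contra hc
  exact h n (by exact_mod_cast not_le.1 hc) hn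

theorem injDim_le {M : ModuleCat.{0} A} {e : ℕ} (h : InjDimLE A e M) :
    injDim A M ≤ e := sInf_le ⟨e, rfl, h⟩

end Cat

end Nak

namespace Nak

section Final

open ArtinAlg NakComb

/-- The sequence `x, y, p x, p y, p (p x), …`. -/
def ws (p : ℤ → ℤ) (x y : ℤ) : ℕ → ℤ
  | 0 => x
  | 1 => y
  | n + 2 => p (ws p x y n)

theorem ws_even (p : ℤ → ℤ) (x y : ℤ) (k : ℕ) : ws p x y (2 * k) = p^[k] x := by
  induction k with
  | zero => rfl
  | succ k ih =>
    rw [Function.iterate_succ_apply', ← ih]; rfl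

theorem ws_odd (p : ℤ → ℤ) (x y : ℤ) (k : ℕ) : ws p x y (2 * k + 1) = p^[k] y := by
  induction k with
  | zero => rfl
  | succ k ih =>
    rw [Function.iterate_succ_apply', ← ih]; rfl

theorem ch_ws {p q : ℤ → ℤ} (hp : Monotone p) {e : ℕ} {s t : ℤ} (h : Ch p q e s t) :
    (∀ x, q (s + 1) ≤ x → x ≤ s → ∀ m ≤ e, ws p x (s + 1) m < ws p x (s + 1) (m + 1)) ∧
    ((Even e ∧ ws p (q (s + 1)) (s + 1) (e + 1) = ws p (q (s + 1)) (s + 1) (e + 2) ∧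
        t = ws p (q (s + 1)) (s + 1) e) ∨
      (Odd e ∧ ws p s (s + 1) (e + 1) = ws p s (s + 1) (e + 2) ∧ t = ws p s (s + 1) e)) := by
  have key : ∀ k x : _, q (s + 1) ≤ x → x ≤ s →
      (p^[k] (s + 1) < p^[k + 1] (q (s + 1)) → ws p x (s + 1) (2 * k + 1) <
        ws p x (s + 1) (2 * k + 1 + 1)) ∧
      (p^[k] s < p^[k] (s + 1) → ws p x (s + 1) (2 * k) < ws p x (s + 1) (2 * k + 1)) := by
    intro k x h1 h2
    rw [ws_odd, show 2 * k + 1 + 1 = 2 * (k + 1) by ring, ws_even, ws_even]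
    exact ⟨fun h => h.trans_le (hp.iterate (k + 1) h1), fun h => (hp.iterate k h2).trans_lt h⟩
  rcases h with ⟨k, rfl, h1, h2, h3, h4⟩ | ⟨k, rfl, h1, h2, h3, h4⟩
  · refine ⟨fun x hx hx' m hm => ?_, Or.inl ⟨even_two_mul k, ?_, ?_⟩⟩
    · rcases Nat.even_or_odd' m with ⟨j, rfl | rfl⟩
      · refine (key j x hx hx').2 ?_
        cases j with
        | zero => simp
        | succ j => exact h2 j (by omega)
      · exact (key j x hx hx').1 (h1 j (by omega))
    · rw [ws_odd, show 2 * k + 2 = 2 * (k + 1) by ring, ws_even, h3]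
    · rw [ws_even, h4]
  · refine ⟨fun x hx hx' m hm => ?_, Or.inr ⟨odd_two_mul_add_one k, ?_, ?_⟩⟩
    · rcases Nat.even_or_odd' m with ⟨j, rfl | rfl⟩
      · refine (key j x hx hx').2 ?_
        cases j with
        | zero => simp
        | succ j => exact h2 j (by omega)
      · exact (key j x hx hx').1 (h1 j (by omega))
    · rw [show 2 * k + 1 + 2 = 2 * (k + 1) + 1 by ring, ws_odd,
        show 2 * k + 1 + 1 = 2 * (k + 1) by ring, ws_even, h3]
    · rw [ws_odd, h4]

theorem chS_ws {p q : ℤ → ℤ} (hq : Monotone q) {e : ℕ} {s t : ℤ} (h : ChS p q e t s) :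
    (∀ y, t + 1 ≤ y → y ≤ p t → ∀ m ≤ e, ws q y t (m + 1) < ws q y t m) ∧
    ((Even e ∧ ws q (p t) t (e + 1) = ws q (p t) t (e + 2) ∧
        s + 1 = ws q (p t) t e) ∨
      (Odd e ∧ ws q (t + 1) t (e + 1) = ws q (t + 1) t (e + 2) ∧ s + 1 = ws q (t + 1) t e)) := by
  have key : ∀ k x : _, t + 1 ≤ x → x ≤ p t →
      (q^[k + 1] (p t) < q^[k] t → ws q x t (2 * k + 1 + 1) <
        ws q x t (2 * k + 1)) ∧
      (q^[k] t < q^[k] (t + 1) → ws q x t (2 * k + 1) < ws q x t (2 * k)) := by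
    intro k x h1 h2
    rw [ws_odd, show 2 * k + 1 + 1 = 2 * (k + 1) by ring, ws_even, ws_even]
    exact ⟨fun h => (hq.iterate (k + 1) h2).trans_lt h, fun h => h.trans_le (hq.iterate k h1)⟩
  rcases h with ⟨k, rfl, h1, h2, h3, h4⟩ | ⟨k, rfl, h1, h2, h3, h4⟩
  · refine ⟨fun x hx hx' m hm => ?_, Or.inl ⟨even_two_mul k, ?_, ?_⟩⟩
    · rcases Nat.even_or_odd' m with ⟨j, rfl | rfl⟩
      · refine (key j x hx hx').2 ?_
        cases j with
        | zero => simp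
        | succ j => exact h2 j (by omega)
      · exact (key j x hx hx').1 (h1 j (by omega))
    · rw [ws_odd, show 2 * k + 2 = 2 * (k + 1) by ring, ws_even, h3]
    · rw [ws_even, h4]
  · refine ⟨fun x hx hx' m hm => ?_, Or.inr ⟨odd_two_mul_add_one k, ?_, ?_⟩⟩
    · rcases Nat.even_or_odd' m with ⟨j, rfl | rfl⟩
      · refine (key j x hx hx').2 ?_
        cases j with
        | zero => simp
        | succ j => exact h2 j (by omega)
      · exact (key j x hx hx').1 (h1 j (by omega))
    · rw [show 2 * k + 1 + 2 = 2 * (k + 1) + 1 by ring, ws_odd,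
        show 2 * k + 1 + 1 = 2 * (k + 1) by ring, ws_even, h3]
    · rw [ws_odd, h4]

variable {A : Type} [Ring A] {D : Data A} {σ : ℤ → D.K}

theorem h_char (hσ : ∀ x, σ (x + 1) = D.π (σ x)) {S : ModuleCat.{0} A} {s t : ℤ} {e : ℕ}
    (hS : Nonempty (S ≃ₗ[A] D.S (σ s))) (h : Ch (pp D σ) (qq D σ) e s t) :
    (∀ x, ERelVal A S x ↔ x = e) ∧
    (∀ T, HRel A S T ↔ Nonempty (T ≃ₗ[A] D.S (σ t))) := by
  obtain ⟨eS⟩ := hS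
  have hSs : IsSimpleModule A S := IsSimpleModule.congr eS
  have hVS : V D σ S s (s + 1) := V.of_simple eS
  have hlt : s < s + 1 := by omega
  have hr : qq D σ (s + 1) ≤ s := by have := qq_lt hσ (s + 1); omega
  obtain ⟨h1, h2⟩ := ch_ws (gc hσ).monotone_u h
  have hchS := V.chain hσ e (ws (pp D σ) s (s + 1)) (fun _ => rfl) (h1 s hr le_rfl) S hVS
  have hchI : ∀ I, IsInjEnvOf A S I → _ := fun I ⟨f, hf⟩ =>
    V.chain hσ e (ws (pp D σ) (qq D σ (s + 1)) (s + 1)) (fun _ => rfl) (h1 _ le_rfl hr) I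
      (hVS.envelope hσ hlt hf)
  have hmin : ∀ I, IsInjEnvOf A S I → min (projDim A S) (projDim A I) = e := by
    intro I hI
    apply le_antisymm
    · rcases h2 with ⟨_, h2, _⟩ | ⟨_, h2, _⟩
      · exact min_le_of_right_le (projDim_le ((hchI I hI).2.2.2.2 h2))
      · exact min_le_of_left_le (projDim_le (hchS.2.2.2.2 h2))
    · exact le_min (le_projDim hchS.2.2.1) (le_projDim (hchI I hI).2.2.1)
  obtain ⟨I0, f0, hf0⟩ := hVS.exists_envelope hσ hlt
  have hI0 : IsInjEnvOf A S I0 := ⟨f0, hf0⟩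
  have hE : ∀ x, ERelVal A S x ↔ x = e := by
    intro x
    constructor
    · rintro ⟨I, hI, rfl⟩
      exact hmin I hI
    · rintro rfl
      exact ⟨I0, hI0, (hmin I0 hI0).symm⟩
  refine ⟨hE, fun T => ?_⟩
  -- the syzygies in question
  have hX : ∀ N, ((Odd e ∧ N = S) ∨ (Even e ∧ IsInjEnvOf A S N)) →
      (∃ X, IsNthSyzygy A e N X) ∧ ∀ X, IsNthSyzygy A e N X → ∃ u, t < u ∧ V D σ X t u := by
    intro N hN
    rcases hN with ⟨ho, rfl⟩ | ⟨he, hN⟩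
    · rcases h2 with ⟨he, _⟩ | ⟨_, _, ht⟩
      · exact absurd ho (Nat.not_odd_iff_even.2 he)
      · refine ⟨hchS.1, fun X hX => ⟨_, ?_, by rw [ht]; exact hchS.2.1 X hX⟩⟩
        rw [ht]
        exact h1 s hr le_rfl e le_rfl
    · rcases h2 with ⟨_, _, ht⟩ | ⟨ho, _⟩
      · refine ⟨(hchI N hN).1, fun X hX => ⟨_, ?_, by rw [ht]; exact (hchI N hN).2.1 X hX⟩⟩
        rw [ht]
        exact h1 _ le_rfl hr e le_rfl
      · exact absurd ho (Nat.not_odd_iff_even.2 he)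
  constructor
  · rintro ⟨_, hT, z, hz, N, hN, X, hNX, hXT⟩
    have hze : z = e := by exact_mod_cast (hE z).1 hz
    subst hze
    obtain ⟨u, htu, hV⟩ := (hX N hN).2 X hNX
    exact (hV.simpleTop htu).1 hXT
  · rintro hT
    have hTs : IsSimpleModule A T := IsSimpleModule.congr hT.some
    obtain ⟨N, hN⟩ : ∃ N, ((Odd e ∧ N = S) ∨ (Even e ∧ IsInjEnvOf A S N)) := by
      rcases Nat.even_or_odd e with he | ho
      · exact ⟨I0, Or.inr ⟨he, hI0⟩⟩
      · exact ⟨S, Or.inl ⟨ho, rfl⟩⟩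
    obtain ⟨⟨X, hNX⟩, hX⟩ := hX N hN
    obtain ⟨u, htu, hV⟩ := hX X hNX
    exact ⟨hSs, hTs, e, (hE e).2 rfl, N, hN, X, hNX, (hV.simpleTop htu).2 hT⟩

theorem hs_char (hσ : ∀ x, σ (x + 1) = D.π (σ x)) {T : ModuleCat.{0} A} {s t : ℤ} {e : ℕ}
    (hT : Nonempty (T ≃ₗ[A] D.S (σ t))) (h : ChS (pp D σ) (qq D σ) e t s) :
    (∀ x, EStarVal A T x ↔ x = e) ∧
    (∀ S, HStarRel A T S ↔ Nonempty (S ≃ₗ[A] D.S (σ s))) := by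
  obtain ⟨eT⟩ := hT
  have hTs : IsSimpleModule A T := IsSimpleModule.congr eT
  have hVT : V D σ T t (t + 1) := V.of_simple eT
  have hlt : t < t + 1 := by omega
  have hr : t + 1 ≤ pp D σ t := by have := lt_pp (D := D) (σ := σ) t; omega
  obtain ⟨h1, h2⟩ := chS_ws (gc hσ).monotone_l h
  have hchT := V.cochain hσ e (ws (qq D σ) (t + 1) t) (fun _ => rfl) (h1 _ le_rfl hr) T hVT
  have hchP : ∀ P, IsProjCoverOf A T P → _ := fun P ⟨f, hf⟩ =>
    V.cochain hσ e (ws (qq D σ) (pp D σ t) t) (fun _ => rfl) (h1 _ hr le_rfl) P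
      (hVT.cover hlt hf)
  have hmin : ∀ P, IsProjCoverOf A T P → min (injDim A T) (injDim A P) = e := by
    intro P hP
    apply le_antisymm
    · rcases h2 with ⟨_, h2, _⟩ | ⟨_, h2, _⟩
      · exact min_le_of_right_le (injDim_le ((hchP P hP).2.2.2.2 h2))
      · exact min_le_of_left_le (injDim_le (hchT.2.2.2.2 h2))
    · exact le_min (le_injDim hchT.2.2.1) (le_injDim (hchP P hP).2.2.1)
  obtain ⟨P0, f0, hf0⟩ := hVT.exists_cover hlt
  have hP0 : IsProjCoverOf A T P0 := ⟨f0, hf0⟩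
  have hE : ∀ x, EStarVal A T x ↔ x = e := by
    intro x
    constructor
    · rintro ⟨P, hP, rfl⟩
      exact hmin P hP
    · rintro rfl
      exact ⟨P0, hP0, (hmin P0 hP0).symm⟩
  refine ⟨hE, fun S => ?_⟩
  have hX : ∀ N, ((Odd e ∧ N = T) ∨ (Even e ∧ IsProjCoverOf A T N)) →
      (∃ X, IsNthCosyzygy A e N X) ∧
        ∀ X, IsNthCosyzygy A e N X → ∃ u, u < s + 1 ∧ V D σ X u (s + 1) := by
    intro N hN
    rcases hN with ⟨ho, rfl⟩ | ⟨he, hN⟩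
    · rcases h2 with ⟨he, _⟩ | ⟨_, _, ht⟩
      · exact absurd ho (Nat.not_odd_iff_even.2 he)
      · refine ⟨hchT.1, fun X hX => ⟨_, ?_, by rw [ht]; exact hchT.2.1 X hX⟩⟩
        rw [ht]
        exact h1 _ le_rfl hr e le_rfl
    · rcases h2 with ⟨_, _, ht⟩ | ⟨ho, _⟩
      · refine ⟨(hchP N hN).1, fun X hX => ⟨_, ?_, by rw [ht]; exact (hchP N hN).2.1 X hX⟩⟩
        rw [ht]
        exact h1 _ hr le_rfl e le_rfl
      · exact absurd ho (Nat.not_odd_iff_even.2 he)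
  have hss : s + 1 - 1 = s := by ring
  constructor
  · rintro ⟨_, hS, z, hz, N, hN, X, hNX, hXS⟩
    have hze : z = e := by exact_mod_cast (hE z).1 hz
    subst hze
    obtain ⟨u, htu, hV⟩ := (hX N hN).2 X hNX
    have := (hV.simpleSoc hσ htu).1 hXS
    rwa [hss] at this
  · rintro hS
    have hSs : IsSimpleModule A S := IsSimpleModule.congr hS.some
    obtain ⟨N, hN⟩ : ∃ N, ((Odd e ∧ N = T) ∨ (Even e ∧ IsProjCoverOf A T N)) := by
      rcases Nat.even_or_odd e with he | ho
      · exact ⟨P0, Or.inr ⟨he, hP0⟩⟩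
      · exact ⟨T, Or.inl ⟨ho, rfl⟩⟩
    obtain ⟨⟨X, hNX⟩, hX⟩ := hX N hN
    obtain ⟨u, htu, hV⟩ := hX X hNX
    refine ⟨hTs, hSs, e, (hE e).2 rfl, N, hN, X, hNX, (hV.simpleSoc hσ htu).2 ?_⟩
    rwa [hss]

/-- Coordinates around a given simple module. -/
theorem exists_coord (D : Data A) (S : ModuleCat.{0} A) (hS : IsSimpleModule A S) :
    ∃ σ : ℤ → D.K, (∀ x, σ (x + 1) = D.π (σ x)) ∧ Nonempty (S ≃ₗ[A] D.S (σ 0)) ∧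
      ∃ n : ℕ, 0 < n ∧ ∀ x, pp D σ (x + n) = pp D σ x + n := by
  obtain ⟨k, hk⟩ := D.ex S hS
  have := D.fin
  have hk0 : (D.π ^ (0 : ℤ)) k = k := by rw [zpow_zero]; rfl
  refine ⟨fun x => (D.π ^ x) k, fun x => ?_, ?_, orderOf D.π, orderOf_pos _, ?_⟩
  · change (D.π ^ (x + 1)) k = D.π ((D.π ^ x) k)
    rw [add_comm, zpow_add, zpow_one]; rfl
  · change Nonempty (S ≃ₗ[A] D.S ((D.π ^ (0 : ℤ)) k))
    rw [hk0]
    exact hk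
  · intro x
    have h1 : (D.π ^ (x + (orderOf D.π : ℤ))) k = (D.π ^ x) k := by
      rw [zpow_add, zpow_natCast, pow_orderOf_eq_one, mul_one]
    unfold pp
    rw [show (fun x : ℤ => (D.π ^ x) k) (x + (orderOf D.π : ℤ)) = (fun x : ℤ => (D.π ^ x) k) x
      from h1]
    ring

/-- All the information for a simple module `S` as the source. -/
theorem source (D : Data A) (S : ModuleCat.{0} A) (hS : IsSimpleModule A S) :
    ∃ (k l : D.K) (e : ℕ), Nonempty (S ≃ₗ[A] D.S k) ∧ (∀ x, ERelVal A S x ↔ x = e) ∧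
      (∀ T, HRel A S T ↔ Nonempty (T ≃ₗ[A] D.S l)) ∧
      ∀ T : ModuleCat.{0} A, Nonempty (T ≃ₗ[A] D.S l) → (∀ x, EStarVal A T x ↔ x = e) ∧
        (∀ S', HStarRel A T S' ↔ Nonempty (S' ≃ₗ[A] D.S k)) := by
  obtain ⟨σ, hσ, hS0, n, hn, hp⟩ := exists_coord D S hS
  obtain ⟨e, t, hc⟩ := Ch_exists (gc hσ) n hn hp 0
  obtain ⟨h1, h2⟩ := h_char hσ hS0 hc
  exact ⟨σ 0, σ t, e, hS0, h1, h2, fun T hT => hs_char hσ hT ((Ch_iff_ChS (gc hσ)).1 hc)⟩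

/-- All the information for a simple module `T` as the target. -/
theorem target (D : Data A) (T : ModuleCat.{0} A) (hT : IsSimpleModule A T) :
    ∃ (k l : D.K), Nonempty (T ≃ₗ[A] D.S l) ∧
      (∀ S, HStarRel A T S ↔ Nonempty (S ≃ₗ[A] D.S k)) ∧
      ∀ S : ModuleCat.{0} A, Nonempty (S ≃ₗ[A] D.S k) →
        (∀ T', HRel A S T' ↔ Nonempty (T' ≃ₗ[A] D.S l)) := by
  obtain ⟨σ, hσ, hT0, n, hn, hp⟩ := exists_coord D T hT
  obtain ⟨e, s, hc⟩ := ChS_exists (gc hσ) n hn hp 0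
  obtain ⟨h1, h2⟩ := hs_char hσ hT0 hc
  exact ⟨σ s, σ 0, hT0, h2, fun S hS => (h_char hσ hS ((Ch_iff_ChS (gc hσ)).2 hc)).2⟩

theorem toIso {X Y : ModuleCat.{0} A} {k : D.K} (h : Nonempty (X ≃ₗ[A] D.S k))
    (h' : Nonempty (Y ≃ₗ[A] D.S k)) : Nonempty (X ≅ Y) :=
  ⟨(h.some.trans h'.some.symm).toModuleIso⟩

theorem nakH_of_isNakayama (h : IsNakayama A) : NakH A :=
  fun M _ _ hf hn hi => h (ModuleCat.of A M) hf ⟨hn, hi⟩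

end Final

end Nak

open ArtinAlg in
/-- Let `A` be a Nakayama algebra and let
`h(S) = top (Ω^{e(S)} N S)` and `h*(S) = soc (Σ^{e*(S)} N* S)`. Then `h` is a
permutation of the simple modules with inverse `h*`, and `e*(h(S)) = e(S)` for every
simple module `S`. -/
theorem statement_17 (R : Type) [CommRing R] [IsArtinianRing R]
    (A : Type) [Ring A] [Algebra R A] [Module.Finite R A]
    (hNak : IsNakayama A) :
    (∀ S : ModuleCat.{0} A, IsSimpleModule A ↥S → ∃ T, HRel A S T) ∧
    (∀ T : ModuleCat.{0} A, IsSimpleModule A ↥T → ∃ S, HRel A S T) ∧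
    (∀ S T : ModuleCat.{0} A, HRel A S T ↔ HStarRel A T S) ∧
    (∀ S T T' : ModuleCat.{0} A, HRel A S T → HRel A S T' → Nonempty (T ≅ T')) ∧
    (∀ S S' T : ModuleCat.{0} A, HRel A S T → HRel A S' T → Nonempty (S ≅ S')) ∧
    (∀ S T : ModuleCat.{0} A, HRel A S T →
      ∀ x : ℕ∞, ERelVal A S x ↔ EStarVal A T x) := by
  have : IsArtinianRing A := IsArtinianRing.of_finite R A
  obtain ⟨D⟩ := Nak.exists_data (Nak.nakH_of_isNakayama hNak)
  have key : ∀ S T : ModuleCat.{0} A, HRel A S T → HStarRel A T S := by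
    intro S T h
    obtain ⟨k, l, e, h1, h2, h3, h4⟩ := Nak.source D S h.1
    exact ((h4 T ((h3 T).1 h)).2 S).2 h1
  refine ⟨fun S hS => ?_, fun T hT => ?_, fun S T => ⟨key S T, fun h => ?_⟩,
    fun S T T' h h' => ?_, fun S S' T h h' => ?_, fun S T h x => ?_⟩
  · obtain ⟨k, l, e, h1, h2, h3, h4⟩ := Nak.source D S hS
    exact ⟨D.S l, (h3 _).2 ⟨LinearEquiv.refl _ _⟩⟩
  · obtain ⟨k, l, h1, h2, h3⟩ := Nak.target D T hT
    exact ⟨D.S k, (h3 _ ⟨LinearEquiv.refl _ _⟩ T).2 h1⟩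
  · obtain ⟨k, l, h1, h2, h3⟩ := Nak.target D T h.1
    exact (h3 S ((h2 S).1 h) T).2 h1
  · obtain ⟨k, l, e, h1, h2, h3, h4⟩ := Nak.source D S h.1
    exact Nak.toIso ((h3 _).1 h) ((h3 _).1 h')
  · obtain ⟨k, l, h1, h2, h3⟩ := Nak.target D T h.2.1
    exact Nak.toIso ((h2 _).1 (key _ _ h)) ((h2 _).1 (key _ _ h'))
  · obtain ⟨k, l, e, h1, h2, h3, h4⟩ := Nak.source D S h.1
    rw [h2 x, (h4 T ((h3 T).1 h)).1 x]
end
end
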